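/- arXiv:1505.03434 — 7 statements merged into one kernel-verified Lean document; each statement's English description precedes it below -/
import Mathlib

section
/- Let A : ℝ³ → ℝ³ be a smooth vector potential with magnetic field B = ∇×A, and suppose B does not vanish on an open set Ω ⊆ ℝ³; set b = B/‖B‖. Let U ⊆ ℝ³ be open and χ : U → Ω a smooth map with invertible differential such that, for every q̂ ∈ U: (i) ∂₃χ(q̂) = b(χ(q̂)), and (ii) dα_{χ(q̂)}(Dχ(q̂)u, Dχ(q̂)v) = u₁v₂ − u₂v₁ for all u, v ∈ ℝ³ (i.e. χ*(dα) = dq̂₁∧dq̂₂). Then det Dχ(q̂) = ‖B(χ(q̂))‖^{-1} for every q̂ ∈ U. -/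
open Matrix

noncomputable section

/-- The curl `∇ × A` of a vector field on `ℝ³`. -/
def curl (A : (Fin 3 → ℝ) → (Fin 3 → ℝ)) (q : Fin 3 → ℝ) : Fin 3 → ℝ :=
  ![fderiv ℝ (fun x => A x 2) q (Pi.single 1 1) - fderiv ℝ (fun x => A x 1) q (Pi.single 2 1),
    fderiv ℝ (fun x => A x 0) q (Pi.single 2 1) - fderiv ℝ (fun x => A x 2) q (Pi.single 0 1),
    fderiv ℝ (fun x => A x 1) q (Pi.single 0 1) - fderiv ℝ (fun x => A x 0) q (Pi.single 1 1)]

/-- The Euclidean norm on `ℝ³` (as `Fin 3 → ℝ`). -/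
def norm3 (v : Fin 3 → ℝ) : ℝ := Real.sqrt (v ⬝ᵥ v)

/-- The canonical symplectic form on `ℝ⁶ = ℝ³ × ℝ³`:
`ω₀((u₁,u₂),(v₁,v₂)) = ⟨v₁,u₂⟩ − ⟨v₂,u₁⟩`. -/
def omega0 (u v : (Fin 3 → ℝ) × (Fin 3 → ℝ)) : ℝ :=
  v.1 ⬝ᵥ u.2 - v.2 ⬝ᵥ u.1

/-- The adjoint (transpose with respect to the Euclidean dot product) of a continuous
linear map `ℝ³ → ℝ³`. -/
def adjoint3 (L : (Fin 3 → ℝ) →L[ℝ] (Fin 3 → ℝ)) (w : Fin 3 → ℝ) : Fin 3 → ℝ :=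
  fun i => (L (Pi.single i 1)) ⬝ᵥ w

/-- Straightening a nonvanishing magnetic field: if `χ` straightens the direction `b = B/‖B‖`
(`∂₃χ = b∘χ`) and pulls the magnetic two-form `dα_q(U,V) = ⟨U, V × B(q)⟩` back to
`dq̂₁ ∧ dq̂₂`, then `det Dχ(q̂) = ‖B(χ(q̂))‖⁻¹`. -/
theorem statement1 (A : (Fin 3 → ℝ) → (Fin 3 → ℝ)) (hA : ContDiff ℝ (⊤ : ℕ∞) A)
    (Ω : Set (Fin 3 → ℝ)) (hΩ : IsOpen Ω) (hB : ∀ q ∈ Ω, curl A q ≠ 0)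
    (U : Set (Fin 3 → ℝ)) (hU : IsOpen U)
    (χ : (Fin 3 → ℝ) → (Fin 3 → ℝ)) (hχ : ContDiffOn ℝ (⊤ : ℕ∞) χ U)
    (hmaps : Set.MapsTo χ U Ω)
    (hinv : ∀ qh ∈ U, Function.Bijective (fderiv ℝ χ qh))
    (hfield : ∀ qh ∈ U,
      fderiv ℝ χ qh (Pi.single 2 1) = (norm3 (curl A (χ qh)))⁻¹ • curl A (χ qh))
    (hsymp : ∀ qh ∈ U, ∀ u v : Fin 3 → ℝ,
      (fderiv ℝ χ qh u) ⬝ᵥ crossProduct (fderiv ℝ χ qh v) (curl A (χ qh)) =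
        u 0 * v 1 - u 1 * v 0) :
    ∀ qh ∈ U,
      LinearMap.det ((fderiv ℝ χ qh).toLinearMap) = (norm3 (curl A (χ qh)))⁻¹ := by
  intro qh hq
  have h2 := hfield qh hq
  have hs := hsymp qh hq (Pi.single 0 1) (Pi.single 1 1)
  generalize curl A (χ qh) = B at *
  generalize fderiv ℝ χ qh = L at *
  generalize (norm3 B)⁻¹ = n at *
  rw [← LinearMap.det_toMatrix', Matrix.det_fin_three]
  simp only [LinearMap.toMatrix'_apply, ContinuousLinearMap.coe_coe]
  have e : ∀ j : Fin 3, (fun j' => if j' = j then (1:ℝ) else 0) = Pi.single j 1 := by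
    intro j
    ext k
    simp [Pi.single_apply]
  simp only [e, h2, Pi.smul_apply, smul_eq_mul]
  simp [crossProduct, dotProduct, Fin.sum_univ_three] at hs
  linear_combination n * hs
end
end

section
/- Let A : ℝ³ → ℝ³ be a smooth vector potential with magnetic field B = ∇×A, and assume B(0) ≠ 0; set b = B/‖B‖ near 0. Then there exist open neighborhoods U and V of 0 in ℝ³ and a smooth diffeomorphism χ : U → V with χ(0) = 0 such that, for every q̂ ∈ U: (i) ∂₃χ(q̂) = b(χ(q̂)), and (ii) dα_{χ(q̂)}(Dχ(q̂)u, Dχ(q̂)v) = u₁v₂ − u₂v₁ for all u, v ∈ ℝ³ (i.e. χ straightens the field direction and pulls the magnetic two-form back to dq̂₁∧dq̂₂). -/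
open Matrix

noncomputable section

set_option linter.unusedSectionVars false

open Set Filter Topology Metric in
/-- Inverse function theorem giving a smooth local inverse on an open set. -/
lemma exists_smooth_local_inverse {E : Type*} [NormedAddCommGroup E] [NormedSpace ℝ E]
    [CompleteSpace E] (f : E → E) (W : Set E) (hW : IsOpen W)
    (hf : ContDiffOn ℝ (⊤ : ℕ∞) f W) (a : E) (ha : a ∈ W) (e : E ≃L[ℝ] E)
    (he : fderiv ℝ f a = (e : E →L[ℝ] E)) :
    ∃ P : OpenPartialHomeomorph E E, (P : E → E) = f ∧ a ∈ P.source ∧ P.source ⊆ W ∧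
      ∀ y ∈ P.target, ContDiffAt ℝ (⊤ : ℕ∞) P.symm y := by
  have hfa : ∀ x ∈ W, ContDiffAt ℝ (⊤ : ℕ∞) f x := fun x hx => hf.contDiffAt (hW.mem_nhds hx)
  have hne : ((⊤ : ℕ∞) : WithTop ℕ∞) ≠ 0 := by simp
  have hda : HasFDerivAt f (e : E →L[ℝ] E) a := by
    rw [← he]; exact ((hfa a ha).differentiableAt hne).hasFDerivAt
  have hcont : ContinuousOn (fderiv ℝ f) W :=
    hf.continuousOn_fderiv_of_isOpen hW (by exact_mod_cast le_top)
  set S : Set E := W ∩ fderiv ℝ f ⁻¹' (range ((↑) : (E ≃L[ℝ] E) → E →L[ℝ] E)) with hS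
  have hSo : IsOpen S := hcont.isOpen_inter_preimage hW ContinuousLinearEquiv.isOpen
  let P0 := (hfa a ha).toOpenPartialHomeomorph f hda hne
  have hP0 : a ∈ P0.source := (hfa a ha).mem_toOpenPartialHomeomorph_source hda hne
  refine ⟨P0.restrOpen S hSo, rfl, ⟨hP0, ha, e, he.symm⟩, fun x hx => hx.2.1, ?_⟩
  intro y hy
  set P := P0.restrOpen S hSo with hP
  have hx : P.symm y ∈ P.source := P.map_target hy
  obtain ⟨-, hxW, e', he'⟩ := hx
  refine P.contDiffAt_symm hy (f₀' := e') ?_ (hfa _ hxW)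
  rw [he']
  exact ((hfa _ hxW).differentiableAt hne).hasFDerivAt

section CompOperator

variable {K : Type} [TopologicalSpace K] [CompactSpace K]
variable {E : Type} [NormedAddCommGroup E] [NormedSpace ℝ E]

/-- Pointwise application of operators, as a continuous bilinear map. -/
def pointwiseApply (K : Type) [TopologicalSpace K] [CompactSpace K]
    (E : Type) [NormedAddCommGroup E] [NormedSpace ℝ E]
    (F : Type) [NormedAddCommGroup F] [NormedSpace ℝ F] :
    C(K, E →L[ℝ] F) →L[ℝ] C(K, E) →L[ℝ] C(K, F) :=
  LinearMap.mkContinuous₂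
    (LinearMap.mk₂ ℝ
      (fun (L : C(K, E →L[ℝ] F)) (h : C(K, E)) =>
        (⟨fun s => L s (h s), L.continuous.clm_apply h.continuous⟩ : C(K, F)))
      (by intros; ext; simp) (by intros; ext; simp) (by intros; ext; simp) (by intros; ext; simp))
    1 (by
      intro L h
      rw [ContinuousMap.norm_le _ (by positivity)]
      intro s
      simp only [LinearMap.mk₂_apply, ContinuousMap.coe_mk, one_mul]
      exact ((L s).le_opNorm _).trans (mul_le_mul (L.norm_coe_le_norm s) (h.norm_coe_le_norm s)
        (norm_nonneg _) (norm_nonneg L)))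

@[simp] lemma pointwiseApply_apply {F : Type} [NormedAddCommGroup F] [NormedSpace ℝ F]
    (L : C(K, E →L[ℝ] F)) (h : C(K, E)) (s : K) : pointwiseApply K E F L h s = L s (h s) := rfl

lemma hasFDerivAt_postcomp {F : Type} [NormedAddCommGroup F] [NormedSpace ℝ F]
    (f : C(E, F)) (f' : C(E, E →L[ℝ] F)) (hf : ∀ x, HasFDerivAt f (f' x) x) (γ : C(K, E)) :
    HasFDerivAt (fun γ : C(K, E) => f.comp γ) (pointwiseApply K E F (f'.comp γ)) γ := by
  rw [hasFDerivAt_iff_isLittleO_nhds_zero, Asymptotics.isLittleO_iff]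
  intro ε hε
  have hc : Continuous (fun γ : C(K, E) => f'.comp γ) := ContinuousMap.continuous_postcomp f'
  obtain ⟨δ, hδ, hδ'⟩ : ∃ δ > 0, ∀ (η : C(K, E)), dist η γ < δ →
      dist (f'.comp η) (f'.comp γ) < ε := Metric.continuousAt_iff.1 hc.continuousAt ε hε
  filter_upwards [Metric.ball_mem_nhds (0 : C(K, E)) hδ] with h hh
  rw [ContinuousMap.norm_le _ (by positivity)]
  intro s
  have hhs : ‖h s‖ < δ := (h.norm_coe_le_norm s).trans_lt (by simpa using hh)
  have key : ∀ z ∈ Metric.ball (γ s) δ, ‖f' z - f' (γ s)‖ ≤ ε := by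
    intro z hz
    have h1 : dist (γ + ContinuousMap.const K (z - γ s)) γ < δ := by
      rw [dist_eq_norm, add_sub_cancel_left]
      refine lt_of_le_of_lt ?_ (mem_ball_iff_norm.1 hz)
      rw [ContinuousMap.norm_le _ (by positivity)]
      intro _; simp
    have h2 := hδ' _ h1
    have h3 := (ContinuousMap.dist_apply_le_dist s).trans_lt h2
    simp only [ContinuousMap.comp_apply, ContinuousMap.add_apply, ContinuousMap.const_apply,
      add_sub_cancel] at h3
    rw [dist_eq_norm] at h3
    exact h3.le
  have := (convex_ball (γ s) δ).norm_image_sub_le_of_norm_hasFDerivWithin_le'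
    (fun z _ => (hf z).hasFDerivWithinAt) key (Metric.mem_ball_self hδ)
    (y := γ s + h s) (by simpa using hhs)
  simp only [add_sub_cancel_left] at this
  calc _ = ‖f (γ s + h s) - f (γ s) - f' (γ s) (h s)‖ := by simp
    _ ≤ ε * ‖h s‖ := this
    _ ≤ _ := by gcongr; exact h.norm_coe_le_norm s

lemma contDiff_postcomp_nat (n : ℕ) : ∀ {F : Type} [NormedAddCommGroup F] [NormedSpace ℝ F]
    (f : C(E, F)), ContDiff ℝ n f → ContDiff ℝ n (fun γ : C(K, E) => f.comp γ) := by
  induction n with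
  | zero =>
    intro F _ _ f _
    exact contDiff_zero.2 (ContinuousMap.continuous_postcomp f)
  | succ n ih =>
    intro F _ _ f hf
    have hf2 : ContDiff ℝ n (fderiv ℝ f) := hf.fderiv_right (by norm_cast)
    have hfd : Differentiable ℝ f := hf.differentiable (by norm_cast)
    rw [show ((n + 1 : ℕ) : WithTop ℕ∞) = (n : ℕ) + 1 by norm_cast,
      contDiff_succ_iff_hasFDerivAt]
    refine ⟨fun γ => pointwiseApply K E F ((⟨fderiv ℝ f, hf2.continuous⟩ : C(E, _)).comp γ),
      ?_, fun γ => hasFDerivAt_postcomp f _ (fun x => (hfd x).hasFDerivAt) γ⟩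
    exact (pointwiseApply K E F).contDiff.comp (ih ⟨fderiv ℝ f, hf2.continuous⟩ hf2)

lemma contDiff_postcomp {F : Type} [NormedAddCommGroup F] [NormedSpace ℝ F]
    (f : C(E, F)) (hf : ContDiff ℝ (⊤ : ℕ∞) f) :
    ContDiff ℝ (⊤ : ℕ∞) (fun γ : C(K, E) => f.comp γ) :=
  contDiff_infty.2 fun n => contDiff_postcomp_nat n f (contDiff_infty.1 hf n)

end CompOperator

section Flow

variable {E : Type} [NormedAddCommGroup E] [NormedSpace ℝ E]

lemma continuous_iccExtend (γ : C(unitInterval, E)) :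
    Continuous (fun τ : ℝ => γ (Set.projIcc 0 1 zero_le_one τ)) :=
  γ.continuous.comp continuous_projIcc

/-- The primitive `s ↦ ∫₀ˢ γ` as a bounded operator on paths. -/
def primitiveL (E : Type) [NormedAddCommGroup E] [NormedSpace ℝ E] :
    C(unitInterval, E) →L[ℝ] C(unitInterval, E) :=
  LinearMap.mkContinuous
    { toFun := fun γ => ⟨fun s => ∫ τ in (0 : ℝ)..s, γ (Set.projIcc 0 1 zero_le_one τ),
        (intervalIntegral.continuous_primitive
          (fun a b => (continuous_iccExtend γ).intervalIntegrable a b) 0).comp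
            continuous_subtype_val⟩
      map_add' := by
        intro γ η
        ext s
        simp only [ContinuousMap.add_apply, ContinuousMap.coe_mk]
        exact intervalIntegral.integral_add ((continuous_iccExtend γ).intervalIntegrable _ _)
          ((continuous_iccExtend η).intervalIntegrable _ _)
      map_smul' := by
        intro c γ
        ext s
        simp }
    1 (by
      intro γ
      rw [ContinuousMap.norm_le _ (by positivity)]
      intro s
      simp only [LinearMap.coe_mk, AddHom.coe_mk, ContinuousMap.coe_mk, one_mul]
      have h := intervalIntegral.norm_integral_le_of_norm_le_const (a := 0) (b := (s : ℝ))
        (f := fun τ => γ (Set.projIcc 0 1 zero_le_one τ)) (C := ‖γ‖)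
        (fun τ _ => γ.norm_coe_le_norm _)
      refine h.trans ?_
      rw [sub_zero, abs_of_nonneg s.2.1]
      exact mul_le_of_le_one_right (norm_nonneg _) s.2.2)

lemma primitiveL_apply (γ : C(unitInterval, E)) (s : unitInterval) :
    primitiveL E γ s = ∫ τ in (0 : ℝ)..s, γ (Set.projIcc 0 1 zero_le_one τ) := rfl

/-- Constant paths as a bounded operator. -/
def constL (E : Type) [NormedAddCommGroup E] [NormedSpace ℝ E] :
    E →L[ℝ] C(unitInterval, E) :=
  LinearMap.mkContinuous
    { toFun := fun x => ContinuousMap.const _ x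
      map_add' := by intros; ext; simp
      map_smul' := by intros; ext; simp } 1 (by
      intro x
      rw [ContinuousMap.norm_le _ (by positivity)]
      intro s; simp)

@[simp] lemma constL_apply (x : E) (s : unitInterval) : constL E x s = x := rfl

/-- Rescaling of a path, `τ ↦ γ (s τ)`. -/
def rescale (γ : C(unitInterval, E)) (s : unitInterval) : C(unitInterval, E) :=
  ⟨fun τ => γ (s * τ), by fun_prop⟩

lemma norm_rescale_le (γ : C(unitInterval, E)) (s : unitInterval) : ‖rescale γ s‖ ≤ ‖γ‖ := by
  rw [ContinuousMap.norm_le _ (by positivity)]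
  intro τ; exact γ.norm_coe_le_norm _

lemma primitiveL_rescale (γ : C(unitInterval, E)) (s τ : unitInterval) :
    primitiveL E γ (s * τ) = (s : ℝ) • primitiveL E (rescale γ s) τ := by
  rw [primitiveL_apply, primitiveL_apply]
  have h1 : ∫ r in (0 : ℝ)..τ, rescale γ s (Set.projIcc 0 1 zero_le_one r)
      = ∫ r in (0 : ℝ)..τ, γ (Set.projIcc 0 1 zero_le_one ((s : ℝ) * r)) := by
    apply intervalIntegral.integral_congr
    intro r hr
    rw [Set.uIcc_of_le τ.2.1] at hr
    have hr' : r ∈ Set.Icc (0 : ℝ) 1 := ⟨hr.1, hr.2.trans τ.2.2⟩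
    have hsr : (s : ℝ) * r ∈ Set.Icc (0 : ℝ) 1 := unitInterval.mul_mem s.2 hr'
    simp only [rescale, ContinuousMap.coe_mk]
    rw [Set.projIcc_of_mem _ hr', Set.projIcc_of_mem _ hsr]
    rfl
  rw [h1, intervalIntegral.smul_integral_comp_mul_left
    (fun r => γ (Set.projIcc 0 1 zero_le_one r))]
  simp

end Flow

section Flow2

variable {E : Type} [NormedAddCommGroup E] [NormedSpace ℝ E]

/-- The map whose zero set describes rescaled integral curves. -/
def pathMap (v : C(E, E)) (p : ℝ × E × C(unitInterval, E)) : ℝ × E × C(unitInterval, E) :=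
  (p.1, p.2.1, p.2.2 - constL E p.2.1 - p.1 • primitiveL E (v.comp p.2.2))

lemma contDiff_pathMap (v : C(E, E)) (hv : ContDiff ℝ (⊤ : ℕ∞) v) :
    ContDiff ℝ (⊤ : ℕ∞) (pathMap v) := by
  have h1 : ContDiff ℝ (⊤ : ℕ∞) (fun p : ℝ × E × C(unitInterval, E) => v.comp p.2.2) :=
    (contDiff_postcomp v hv).comp (contDiff_snd.comp contDiff_snd)
  have h2 : ContDiff ℝ (⊤ : ℕ∞)
      (fun p : ℝ × E × C(unitInterval, E) => primitiveL E (v.comp p.2.2)) :=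
    (primitiveL E).contDiff.comp h1
  have h3 : ContDiff ℝ (⊤ : ℕ∞)
      (fun p : ℝ × E × C(unitInterval, E) => constL E p.2.1) :=
    (constL E).contDiff.comp (contDiff_fst.comp contDiff_snd)
  exact contDiff_fst.prodMk ((contDiff_fst.comp contDiff_snd).prodMk
    (((contDiff_snd.comp contDiff_snd).sub h3).sub (contDiff_fst.smul h2)))

/-- The derivative of `pathMap` at the origin, as an equivalence. -/
def pathMapEquiv (c : C(unitInterval, E)) :
    (ℝ × E × C(unitInterval, E)) ≃L[ℝ] (ℝ × E × C(unitInterval, E)) :=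
  let f1 := ContinuousLinearMap.fst ℝ ℝ (E × C(unitInterval, E))
  let f2 := (ContinuousLinearMap.fst ℝ E C(unitInterval, E)).comp
    (ContinuousLinearMap.snd ℝ ℝ (E × C(unitInterval, E)))
  let f3 := (ContinuousLinearMap.snd ℝ E C(unitInterval, E)).comp
    (ContinuousLinearMap.snd ℝ ℝ (E × C(unitInterval, E)))
  ContinuousLinearEquiv.equivOfInverse
    (f1.prod (f2.prod (f3 - (constL E).comp f2 - f1.smulRight c)))
    (f1.prod (f2.prod (f3 + (constL E).comp f2 + f1.smulRight c)))
    (by rintro ⟨t, x, γ⟩; simp [f1, f2, f3]; abel)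
    (by rintro ⟨t, x, γ⟩; simp [f1, f2, f3]; abel)

lemma fderiv_pathMap (v : C(E, E)) (hv : ContDiff ℝ (⊤ : ℕ∞) v) :
    fderiv ℝ (pathMap v) 0 = (pathMapEquiv (primitiveL E (v.comp 0)) :
      (ℝ × E × C(unitInterval, E)) →L[ℝ] (ℝ × E × C(unitInterval, E))) := by
  apply HasFDerivAt.fderiv
  have h1 : ContDiff ℝ (⊤ : ℕ∞) (fun p : ℝ × E × C(unitInterval, E) => v.comp p.2.2) :=
    (contDiff_postcomp v hv).comp (contDiff_snd.comp contDiff_snd)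
  have h2 : ContDiff ℝ (⊤ : ℕ∞)
      (fun p : ℝ × E × C(unitInterval, E) => primitiveL E (v.comp p.2.2)) :=
    (primitiveL E).contDiff.comp h1
  have h3 := (h2.differentiable (by simp) 0).hasFDerivAt
  have f1 := hasFDerivAt_fst (𝕜 := ℝ) (p := (0 : ℝ × E × C(unitInterval, E)))
  have f2 := hasFDerivAt_snd (𝕜 := ℝ) (p := (0 : ℝ × E × C(unitInterval, E)))
  have f3 := f2.fst
  have f4 := f2.snd
  have f5 := (constL E).hasFDerivAt.comp (0 : ℝ × E × C(unitInterval, E)) f3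
  have := f1.prodMk (f3.prodMk ((f4.sub f5).sub (f1.smul h3)))
  refine this.congr_fderiv ?_
  ext p <;> simp [pathMapEquiv]

lemma exists_smooth_flow [CompleteSpace E] (v : E → E) (hv : ContDiff ℝ (⊤ : ℕ∞) v) :
    ∃ δ > 0, ∃ φ : ℝ × E → E, ContDiffOn ℝ (⊤ : ℕ∞) φ (Metric.ball 0 δ) ∧
      (∀ x ∈ Metric.ball (0 : E) δ, φ (0, x) = x) ∧
      ∀ p ∈ Metric.ball (0 : ℝ × E) δ,
        HasDerivAt (fun t => φ (t, p.2)) (v (φ p)) p.1 := by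
  let vc : C(E, E) := ⟨v, hv.continuous⟩
  obtain ⟨P, hPc, hP0, -, hPs⟩ := exists_smooth_local_inverse (pathMap vc) Set.univ isOpen_univ
    (contDiff_pathMap vc hv).contDiffOn 0 (Set.mem_univ _) _ (fderiv_pathMap vc hv)
  have hG0 : pathMap vc 0 = 0 := by
    simp [pathMap]
  have hPG : ∀ z, P z = pathMap vc z := fun z => by rw [hPc]
  have hT0 : (0 : ℝ × E × C(unitInterval, E)) ∈ P.target := by
    have := P.map_source hP0
    rwa [hPG, hG0] at this
  have hS0 : P.symm 0 = 0 := by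
    have := P.left_inv hP0
    rwa [hPG, hG0] at this
  obtain ⟨r, hr, hrs⟩ := Metric.isOpen_iff.1 P.open_source 0 hP0
  let ι : ℝ × E → ℝ × E × C(unitInterval, E) := fun p => (p.1, p.2, 0)
  have hι : ContDiff ℝ (⊤ : ℕ∞) ι := contDiff_fst.prodMk (contDiff_snd.prodMk contDiff_const)
  let S : ℝ × E → ℝ × E × C(unitInterval, E) := fun p => P.symm (ι p)
  have hι0 : ι 0 = 0 := rfl
  have hev1 : ∀ᶠ p in nhds (0 : ℝ × E), ι p ∈ P.target :=
    hι.continuous.continuousAt.eventually_mem (by rw [hι0]; exact P.open_target.mem_nhds hT0)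
  have hev2 : ∀ᶠ p in nhds (0 : ℝ × E), S p ∈ Metric.ball 0 r := by
    have hc : ContinuousAt S 0 := by
      have h1 : ContinuousAt P.symm (ι 0) := (hPs _ (by rw [hι0]; exact hT0)).continuousAt
      exact ContinuousAt.comp h1 hι.continuous.continuousAt
    refine hc.eventually_mem ?_
    have : S 0 = 0 := hS0
    rw [this]
    exact Metric.ball_mem_nhds _ hr
  obtain ⟨δ, hδ, hball⟩ := Metric.eventually_nhds_iff_ball.1 (hev1.and hev2)
  let φ : ℝ × E → E := fun p => (S p).2.2 1
  have hφs : ∀ p ∈ Metric.ball (0 : ℝ × E) δ, ContDiffAt ℝ (⊤ : ℕ∞) φ p := by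
    intro p hp
    have h1 : ContDiffAt ℝ (⊤ : ℕ∞) S p := (hPs _ (hball p hp).1).comp p hι.contDiffAt
    exact (ContinuousMap.evalCLM ℝ (1 : unitInterval)).contDiff.contDiffAt.comp p h1.snd.snd
  -- the integral equation
  have hS : ∀ p ∈ Metric.ball (0 : ℝ × E) δ, (S p).1 = p.1 ∧ (S p).2.1 = p.2 ∧
      ∀ s : unitInterval, (S p).2.2 s = p.2 + p.1 • primitiveL E (vc.comp (S p).2.2) s := by
    intro p hp
    have h := P.right_inv (hball p hp).1
    rw [hPG] at h
    change pathMap vc (S p) = ι p at h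
    have h1 : (S p).1 = p.1 := congrArg (fun z => z.1) h
    have h2 : (S p).2.1 = p.2 := congrArg (fun z => z.2.1) h
    have h3 : (S p).2.2 - constL E (S p).2.1 - (S p).1 • primitiveL E (vc.comp (S p).2.2) = 0 :=
      congrArg (fun z => z.2.2) h
    refine ⟨h1, h2, fun s => ?_⟩
    have h4 := congrArg (fun γ : C(unitInterval, E) => γ s) h3
    simp only [ContinuousMap.sub_apply, ContinuousMap.smul_apply, constL_apply, h1, h2,
      ContinuousMap.zero_apply] at h4
    rw [sub_sub, sub_eq_zero] at h4
    exact h4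
  -- scaling
  have hscale : ∀ p ∈ Metric.ball (0 : ℝ × E) δ, ∀ s : unitInterval,
      φ (p.1 * s, p.2) = (S p).2.2 s := by
    intro p hp s
    obtain ⟨h1, h2, h3⟩ := hS p hp
    have hmem := (hball p hp).2
    rw [mem_ball_zero_iff] at hmem
    set γ := (S p).2.2 with hγ
    have habs : |p.1 * (s : ℝ)| ≤ |p.1| := by
      rw [abs_mul, abs_of_nonneg s.2.1]
      exact mul_le_of_le_one_right (abs_nonneg _) s.2.2
    have hsrc : ((p.1 * s, p.2, rescale γ s) : ℝ × E × C(unitInterval, E)) ∈ P.source := by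
      apply hrs
      rw [mem_ball_zero_iff]
      refine lt_of_le_of_lt ?_ hmem
      rw [Prod.norm_def, Prod.norm_def, Prod.norm_def (S p), Prod.norm_def (S p).2, h1, h2]
      exact max_le_max habs (max_le_max le_rfl (norm_rescale_le γ s))
    have hval : pathMap vc (p.1 * s, p.2, rescale γ s) = ι (p.1 * s, p.2) := by
      simp only [pathMap, ι, Prod.mk.injEq, true_and]
      ext τ
      have h4 := h3 (s * τ)
      rw [primitiveL_rescale] at h4
      have h5 : rescale γ s τ = γ (s * τ) := rfl
      have h6 : rescale (vc.comp γ) s = vc.comp (rescale γ s) := rfl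
      simp only [ContinuousMap.sub_apply, ContinuousMap.smul_apply, constL_apply,
        ContinuousMap.zero_apply]
      rw [h5, h4, h6, smul_smul]
      abel
    have := P.left_inv hsrc
    rw [hPG, hval] at this
    change (P.symm (ι (p.1 * s, p.2))).2.2 1 = _
    rw [this]
    change γ (s * 1) = _
    rw [mul_one]
  have hφ1 : ∀ p : ℝ × E, φ p = (S p).2.2 1 := fun p => rfl
  -- derivative
  have hd : ∀ p ∈ Metric.ball (0 : ℝ × E) δ,
      HasDerivAt (fun t => φ (t, p.2)) (fderiv ℝ φ p (1, 0)) p.1 := by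
    intro p hp
    have h1 : HasFDerivAt φ (fderiv ℝ φ p) (p.1, p.2) :=
      ((hφs p hp).differentiableAt (by simp)).hasFDerivAt
    exact h1.comp_hasDerivAt p.1 ((hasDerivAt_id p.1).prodMk (hasDerivAt_const p.1 p.2))
  have hne : ∀ p ∈ Metric.ball (0 : ℝ × E) δ, p.1 ≠ 0 → fderiv ℝ φ p (1, 0) = v (φ p) := by
    intro p hp hp0
    obtain ⟨-, -, h3⟩ := hS p hp
    set γ := (S p).2.2 with hγ
    have e1 : HasDerivWithinAt (fun s : ℝ => φ (p.1 * s, p.2)) (p.1 • fderiv ℝ φ p (1, 0))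
        (Set.Icc 0 1) 1 := by
      have := hd p hp
      have h2 : HasDerivAt (fun s : ℝ => p.1 * s) p.1 1 := by
        simpa using (hasDerivAt_id (1 : ℝ)).const_mul p.1
      have h3 : HasDerivAt (fun t => φ (t, p.2)) (fderiv ℝ φ p (1, 0)) (p.1 * 1) := by
        rwa [mul_one]
      exact (h3.scomp (1 : ℝ) h2).hasDerivWithinAt
    have hcont := continuous_iccExtend (vc.comp γ)
    have e2 : HasDerivWithinAt (fun s : ℝ => p.2 + p.1 • ∫ τ in (0 : ℝ)..s,
        (vc.comp γ) (Set.projIcc 0 1 zero_le_one τ)) (p.1 • v (φ p)) (Set.Icc 0 1) 1 := by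
      have h1 := (hcont.integral_hasStrictDerivAt 0 1).hasDerivAt
      have h2 : (vc.comp γ) (Set.projIcc 0 1 zero_le_one (1 : ℝ)) = v (φ p) := by
        rw [Set.projIcc_right]; rfl
      rw [h2] at h1
      exact ((h1.const_smul p.1).const_add p.2).hasDerivWithinAt
    have e3 := e2.congr_of_mem (f₁ := fun s : ℝ => φ (p.1 * s, p.2)) (by
      intro s hs
      have := hscale p hp ⟨s, hs⟩
      simp only at this
      rw [this, h3 ⟨s, hs⟩]
      rfl) (by simp)
    have := (uniqueDiffOn_Icc (zero_lt_one' ℝ) 1 (by simp)).eq_deriv _ e1 e3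
    exact smul_right_injective E hp0 this
  have hall : ∀ p ∈ Metric.ball (0 : ℝ × E) δ, fderiv ℝ φ p (1, 0) = v (φ p) := by
    rintro ⟨t, x⟩ hp
    by_cases ht : t = 0
    · subst ht
      have c0 : ContinuousAt (fun t : ℝ => (t, x)) 0 := by fun_prop
      have c1 : ContinuousAt (fun t : ℝ => fderiv ℝ φ (t, x) (1, 0)) 0 := by
        have h1 : ContinuousAt (fderiv ℝ φ) (0, x) :=
          ((hφs _ hp).fderiv_right (m := 0) (by norm_cast)).continuousAt
        exact (ContinuousAt.comp (f := fun t : ℝ => (t, x)) h1 c0).clm_apply continuousAt_const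
      have c2 : ContinuousAt (fun t : ℝ => v (φ (t, x))) 0 :=
        hv.continuous.continuousAt.comp
          (ContinuousAt.comp (f := fun t : ℝ => (t, x)) (hφs _ hp).continuousAt c0)
      have hev : ∀ᶠ t in nhdsWithin (0 : ℝ) {0}ᶜ,
          fderiv ℝ φ (t, x) (1, 0) = v (φ (t, x)) := by
        have h1 : ∀ᶠ t in nhds (0 : ℝ), (t, x) ∈ Metric.ball (0 : ℝ × E) δ :=
          c0.eventually_mem (Metric.isOpen_ball.mem_nhds hp)
        filter_upwards [nhdsWithin_le_nhds h1, self_mem_nhdsWithin] with t h2 h3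
        exact hne _ h2 h3
      have t1 := c1.tendsto.mono_left (nhdsWithin_le_nhds (s := {0}ᶜ))
      have t2 := c2.tendsto.mono_left (nhdsWithin_le_nhds (s := {0}ᶜ))
      exact tendsto_nhds_unique (t1.congr' hev) t2
    · exact hne _ hp ht
  refine ⟨δ, hδ, φ, fun p hp => (hφs p hp).contDiffWithinAt, ?_, ?_⟩
  · intro x hx
    have hp : ((0 : ℝ), x) ∈ Metric.ball (0 : ℝ × E) δ := by
      rw [mem_ball_zero_iff] at hx ⊢
      simpa [Prod.norm_def] using hx
    have := (hS _ hp).2.2 1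
    simpa [hφ1] using this
  · intro p hp
    rw [← hall p hp]
    exact hd p hp

end Flow2

section Geometry

/-- Scalar triple product. -/
def trip (u v w : Fin 3 → ℝ) : ℝ := u ⬝ᵥ crossProduct v w

lemma trip_eq (u v w : Fin 3 → ℝ) : trip u v w =
    u 0 * (v 1 * w 2 - v 2 * w 1) + u 1 * (v 2 * w 0 - v 0 * w 2)
      + u 2 * (v 0 * w 1 - v 1 * w 0) := by
  simp [trip, cross_apply, dotProduct, Fin.sum_univ_three]

lemma clm_expand (L : (Fin 3 → ℝ) →L[ℝ] (Fin 3 → ℝ)) (u : Fin 3 → ℝ) :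
    L u = u 0 • L (Pi.single 0 1) + u 1 • L (Pi.single 1 1) + u 2 • L (Pi.single 2 1) := by
  have h : u = u 0 • (Pi.single 0 1 : Fin 3 → ℝ) + u 1 • (Pi.single 1 1 : Fin 3 → ℝ)
      + u 2 • (Pi.single 2 1 : Fin 3 → ℝ) := by
    ext i; fin_cases i <;> simp
  conv_lhs => rw [h]
  simp only [map_add, map_smul]

lemma trip_trace (L : (Fin 3 → ℝ) →L[ℝ] (Fin 3 → ℝ))
    (hL : L (Pi.single 0 1) 0 + L (Pi.single 1 1) 1 + L (Pi.single 2 1) 2 = 0)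
    (u v w : Fin 3 → ℝ) :
    trip (L u) v w + trip u (L v) w + trip u v (L w) = 0 := by
  rw [clm_expand L u, clm_expand L v, clm_expand L w]
  simp only [trip_eq, Pi.add_apply, Pi.smul_apply, smul_eq_mul]
  linear_combination (trip u v w) * hL + 0 * trip_eq u v w
    - (L (Pi.single 0 1) 0 + L (Pi.single 1 1) 1 + L (Pi.single 2 1) 2) * trip_eq u v w

lemma hasDerivAt_trip {u v w : ℝ → Fin 3 → ℝ} {u' v' w' : Fin 3 → ℝ} {t : ℝ}
    (hu : HasDerivAt u u' t) (hv : HasDerivAt v v' t) (hw : HasDerivAt w w' t) :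
    HasDerivAt (fun s => trip (u s) (v s) (w s))
      (trip u' (v t) (w t) + trip (u t) v' (w t) + trip (u t) (v t) w') t := by
  have hu := hasDerivAt_pi.1 hu
  have hv := hasDerivAt_pi.1 hv
  have hw := hasDerivAt_pi.1 hw
  simp only [trip_eq]
  have := ((((hu 0).mul (((hv 1).mul (hw 2)).sub ((hv 2).mul (hw 1)))).add
    ((hu 1).mul (((hv 2).mul (hw 0)).sub ((hv 0).mul (hw 2))))).add
    ((hu 2).mul (((hv 0).mul (hw 1)).sub ((hv 1).mul (hw 0)))))
  refine this.congr_deriv ?_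
  simp only [Pi.mul_apply, Pi.sub_apply]
  ring

lemma contDiff_coord_fderiv (A : (Fin 3 → ℝ) → (Fin 3 → ℝ)) (hA : ContDiff ℝ (⊤ : ℕ∞) A)
    (i : Fin 3) (u : Fin 3 → ℝ) :
    ContDiff ℝ (⊤ : ℕ∞) (fun q => fderiv ℝ (fun x => A x i) q u) :=
  ((contDiff_pi.1 hA i).fderiv_right (m := (⊤ : ℕ∞)) (by norm_cast)).clm_apply contDiff_const

lemma contDiff_curl (A : (Fin 3 → ℝ) → (Fin 3 → ℝ)) (hA : ContDiff ℝ (⊤ : ℕ∞) A) :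
    ContDiff ℝ (⊤ : ℕ∞) (curl A) := by
  rw [contDiff_pi]
  intro i
  fin_cases i <;>
  exact (contDiff_coord_fderiv A hA _ _).sub (contDiff_coord_fderiv A hA _ _)

lemma fderiv_fderiv_comm {F : Type} [NormedAddCommGroup F] [NormedSpace ℝ F]
    (f : (Fin 3 → ℝ) → F) (q : Fin 3 → ℝ) (hf : ContDiffAt ℝ (⊤ : ℕ∞) f q)
    (u v : Fin 3 → ℝ) :
    fderiv ℝ (fun x => fderiv ℝ f x u) q v = fderiv ℝ (fun x => fderiv ℝ f x v) q u := by
  have hd : DifferentiableAt ℝ (fderiv ℝ f) q :=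
    (hf.fderiv_right (m := 1) (by norm_cast)).differentiableAt (by simp)
  have h : ∀ a b : Fin 3 → ℝ,
      fderiv ℝ (fun x => fderiv ℝ f x a) q b = fderiv ℝ (fderiv ℝ f) q b a := by
    intro a b
    have := hd.hasFDerivAt.clm_apply (hasFDerivAt_const a q)
    rw [this.fderiv]
    simp
  rw [h, h]
  exact hf.isSymmSndFDerivAt (by simp; norm_cast) _ _

lemma div_curl (A : (Fin 3 → ℝ) → (Fin 3 → ℝ)) (hA : ContDiff ℝ (⊤ : ℕ∞) A) (q : Fin 3 → ℝ) :
    fderiv ℝ (curl A) q (Pi.single 0 1) 0 + fderiv ℝ (curl A) q (Pi.single 1 1) 1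
      + fderiv ℝ (curl A) q (Pi.single 2 1) 2 = 0 := by
  have hd : DifferentiableAt ℝ (curl A) q := (contDiff_curl A hA).differentiable (by simp) q
  have hc : ∀ (i : Fin 3) (u : Fin 3 → ℝ),
      fderiv ℝ (curl A) q u i = fderiv ℝ (fun x => curl A x i) q u := by
    intro i u
    rw [((hasFDerivAt_pi'.1 hd.hasFDerivAt) i).fderiv]
    rfl
  have hdd : ∀ (i : Fin 3) (u : Fin 3 → ℝ),
      DifferentiableAt ℝ (fun q => fderiv ℝ (fun x => A x i) q u) q := fun i u =>
    (contDiff_coord_fderiv A hA i u).differentiable (by simp) q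
  have h0 : (fun x => curl A x 0) = fun q => fderiv ℝ (fun x => A x 2) q (Pi.single 1 1)
    - fderiv ℝ (fun x => A x 1) q (Pi.single 2 1) := rfl
  have h1 : (fun x => curl A x 1) = fun q => fderiv ℝ (fun x => A x 0) q (Pi.single 2 1)
    - fderiv ℝ (fun x => A x 2) q (Pi.single 0 1) := rfl
  have h2 : (fun x => curl A x 2) = fun q => fderiv ℝ (fun x => A x 1) q (Pi.single 0 1)
    - fderiv ℝ (fun x => A x 0) q (Pi.single 1 1) := rfl
  rw [hc, hc, hc, h0, h1, h2, fderiv_fun_sub (hdd _ _) (hdd _ _),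
    fderiv_fun_sub (hdd _ _) (hdd _ _), fderiv_fun_sub (hdd _ _) (hdd _ _)]
  have hs : ∀ i : Fin 3, ContDiffAt ℝ (⊤ : ℕ∞) (fun x => A x i) q := fun i =>
    (contDiff_pi.1 hA i).contDiffAt
  simp only [ContinuousLinearMap.sub_apply]
  rw [fderiv_fderiv_comm _ q (hs 2) (Pi.single 1 1), fderiv_fderiv_comm _ q (hs 1) (Pi.single 2 1),
    fderiv_fderiv_comm _ q (hs 0) (Pi.single 2 1)]
  ring

lemma eq_of_hasDerivAt_zero {F : Type} [NormedAddCommGroup F] [NormedSpace ℝ F] (f : ℝ → F)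
    (t : ℝ) (h : ∀ s ∈ Set.uIcc 0 t, HasDerivAt f 0 s) : f t = f 0 := by
  have := (convex_uIcc (0 : ℝ) t).norm_image_sub_le_of_norm_hasDerivWithin_le (C := 0)
    (fun s hs => (h s hs).hasDerivWithinAt) (by simp) Set.left_mem_uIcc Set.right_mem_uIcc
  rw [zero_mul] at this
  exact sub_eq_zero.1 (norm_le_zero_iff.1 this)

/-- The magnetic two-form is preserved along the field direction. -/
lemma hasDerivAt_trip_zero (B : (Fin 3 → ℝ) → (Fin 3 → ℝ)) (hB : ContDiff ℝ (⊤ : ℕ∞) B)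
    (hdiv : ∀ q, fderiv ℝ B q (Pi.single 0 1) 0 + fderiv ℝ B q (Pi.single 1 1) 1
      + fderiv ℝ B q (Pi.single 2 1) 2 = 0)
    (l : (Fin 3 → ℝ) → ℝ) (hl : ContDiff ℝ (⊤ : ℕ∞) l)
    (W : Set (Fin 3 → ℝ)) (hW : IsOpen W) (Φ : (Fin 3 → ℝ) → (Fin 3 → ℝ))
    (hΦ : ContDiffOn ℝ (⊤ : ℕ∞) Φ W) (e : Fin 3 → ℝ)
    (h3 : ∀ q ∈ W, fderiv ℝ Φ q e = l (Φ q) • B (Φ q))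
    (u v q : Fin 3 → ℝ) (t : ℝ) (hq : q + t • e ∈ W) :
    HasDerivAt (fun s : ℝ => trip (fderiv ℝ Φ (q + s • e) u)
      (fderiv ℝ Φ (q + s • e) v) (B (Φ (q + s • e)))) 0 t := by
  set x := q + t • e with hx
  have hΦx : ContDiffAt ℝ (⊤ : ℕ∞) Φ x := hΦ.contDiffAt (hW.mem_nhds hq)
  have hΦd := (hΦx.differentiableAt (by simp)).hasFDerivAt
  have hBd := (hB.differentiable (by simp) (Φ x)).hasFDerivAt
  have hld := (hl.differentiable (by simp) (Φ x)).hasFDerivAt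
  have hline : HasDerivAt (fun s : ℝ => q + s • e) e t := by
    simpa using ((hasDerivAt_id t).smul_const e).const_add q
  have hU : ∀ u : Fin 3 → ℝ, HasDerivAt (fun s : ℝ => fderiv ℝ Φ (q + s • e) u)
      (l (Φ x) • fderiv ℝ B (Φ x) (fderiv ℝ Φ x u)
        + (fderiv ℝ l (Φ x) (fderiv ℝ Φ x u)) • B (Φ x)) t := by
    intro u
    have hd : DifferentiableAt ℝ (fun y => fderiv ℝ Φ y u) x :=
      ((hΦx.fderiv_right (m := 1) (by norm_cast)).clm_apply contDiffAt_const).differentiableAt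
        (by simp)
    have h1 := hd.hasFDerivAt.comp_hasDerivAt t hline
    refine h1.congr_deriv ?_
    rw [fderiv_fderiv_comm Φ x hΦx]
    have hev : (fun y => fderiv ℝ Φ y e) =ᶠ[nhds x] fun y => l (Φ y) • B (Φ y) := by
      filter_upwards [hW.mem_nhds hq] with y hy using h3 y hy
    rw [hev.fderiv_eq]
    have h2 := (hld.comp x hΦd).smul (hBd.comp x hΦd)
    have h4 : fderiv ℝ (fun y => l (Φ y) • B (Φ y)) x = _ := h2.fderiv
    rw [h4]
    simp
  have hBl : HasDerivAt (fun s : ℝ => B (Φ (q + s • e)))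
      (l (Φ x) • fderiv ℝ B (Φ x) (B (Φ x))) t := by
    have h1 := (hBd.comp x hΦd).comp_hasDerivAt t hline
    refine h1.congr_deriv ?_
    simp [h3 x hq]
  have := hasDerivAt_trip (hU u) (hU v) hBl
  refine this.congr_deriv ?_
  rw [← hx]
  have htr := trip_trace (fderiv ℝ B (Φ x)) (hdiv _) (fderiv ℝ Φ x u) (fderiv ℝ Φ x v) (B (Φ x))
  simp only [trip_eq, Pi.add_apply, Pi.smul_apply, smul_eq_mul] at htr ⊢
  linear_combination l (Φ x) * htr

/-- A smooth positive modification of the identity near a positive number. -/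
def modId (s₀ s : ℝ) : ℝ := s + Real.smoothTransition (2 - 3 * s / s₀)

lemma modId_pos {s₀ s : ℝ} (h0 : 0 < s₀) (hs : 0 ≤ s) : 0 < modId s₀ s := by
  unfold modId
  rcases hs.eq_or_lt with h | h
  · subst h
    have : 0 < Real.smoothTransition (2 - 3 * 0 / s₀) :=
      Real.smoothTransition.pos_of_pos (by norm_num)
    linarith
  · linarith [Real.smoothTransition.nonneg (2 - 3 * s / s₀)]

lemma modId_eq {s₀ s : ℝ} (h0 : 0 < s₀) (hs : 2 * s₀ / 3 < s) : modId s₀ s = s := by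
  unfold modId
  rw [Real.smoothTransition.zero_of_nonpos, add_zero]
  rw [sub_nonpos, le_div_iff₀ h0]
  linarith

lemma contDiff_modId (s₀ : ℝ) : ContDiff ℝ (⊤ : ℕ∞) (modId s₀) :=
  contDiff_id.add (Real.smoothTransition.contDiff.comp
    (contDiff_const.sub ((contDiff_const.mul contDiff_id).div_const _)))

lemma exists_frame (b : Fin 3 → ℝ) (hb : b ≠ 0) : ∃ e₁ e₂ : Fin 3 → ℝ, trip e₁ e₂ b ≠ 0 := by
  by_contra! h
  apply hb
  ext i
  fin_cases i
  · simpa [trip_eq] using h (Pi.single 1 1) (Pi.single 2 1)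
  · simpa [trip_eq] using h (Pi.single 2 1) (Pi.single 0 1)
  · simpa [trip_eq] using h (Pi.single 0 1) (Pi.single 1 1)

end Geometry

lemma exists_coordinates (B : (Fin 3 → ℝ) → (Fin 3 → ℝ)) (hB : ContDiff ℝ (⊤ : ℕ∞) B)
    (hdiv : ∀ q, fderiv ℝ B q (Pi.single 0 1) 0 + fderiv ℝ B q (Pi.single 1 1) 1
      + fderiv ℝ B q (Pi.single 2 1) 2 = 0) (hB0 : B 0 ≠ 0) :
    ∃ ε > 0, ∃ χ : (Fin 3 → ℝ) → (Fin 3 → ℝ), χ 0 = 0 ∧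
      ContDiffOn ℝ (⊤ : ℕ∞) χ (Metric.ball 0 ε) ∧
      ∀ q ∈ Metric.ball (0 : Fin 3 → ℝ) ε, B (χ q) ≠ 0 ∧
        fderiv ℝ χ q (Pi.single 2 1) = (norm3 (B (χ q)))⁻¹ • B (χ q) ∧
        trip (fderiv ℝ χ q (Pi.single 0 1)) (fderiv ℝ χ q (Pi.single 1 1)) (B (χ q)) = 1 := by
  obtain ⟨e₁, e₂, he⟩ := exists_frame (B 0) hB0
  have hBi := contDiff_pi.1 hB
  -- the two auxiliary scalar functions
  set N : (Fin 3 → ℝ) → ℝ := fun x => B x ⬝ᵥ B x with hN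
  set g : (Fin 3 → ℝ) → ℝ := fun x => trip e₁ e₂ (B x) with hg
  have hNs : ContDiff ℝ (⊤ : ℕ∞) N := by
    simp only [hN, dotProduct, Fin.sum_univ_three]
    fun_prop
  have hgs : ContDiff ℝ (⊤ : ℕ∞) g := by
    simp only [hg, trip_eq]
    fun_prop
  have hNnn : ∀ x, 0 ≤ N x := fun x => by
    simp only [hN, dotProduct, Fin.sum_univ_three]
    nlinarith [mul_self_nonneg (B x 0), mul_self_nonneg (B x 1), mul_self_nonneg (B x 2)]
  have hN0 : 0 < N 0 := lt_of_le_of_ne (hNnn 0) (fun h => hB0 (dotProduct_self_eq_zero.1 h.symm))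
  have hg0 : 0 < g 0 ^ 2 := by positivity
  set l : (Fin 3 → ℝ) → ℝ := fun x => (Real.sqrt (modId (N 0) (N x)))⁻¹ with hl
  set m : (Fin 3 → ℝ) → ℝ := fun x => g x / modId (g 0 ^ 2) (g x ^ 2) with hm
  have hls : ContDiff ℝ (⊤ : ℕ∞) l := by
    have h1 : ∀ x, 0 < modId (N 0) (N x) := fun x => modId_pos hN0 (hNnn x)
    exact (((contDiff_modId (N 0)).comp hNs).sqrt (fun x => (h1 x).ne')).inv
      (fun x => (Real.sqrt_pos.2 (h1 x)).ne')
  have hms : ContDiff ℝ (⊤ : ℕ∞) m := by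
    have h1 : ∀ x, 0 < modId (g 0 ^ 2) (g x ^ 2) := fun x => modId_pos hg0 (sq_nonneg _)
    exact hgs.div ((contDiff_modId (g 0 ^ 2)).comp (hgs.pow 2)) (fun x => (h1 x).ne')
  -- the two flows
  obtain ⟨δb, hδb, φb, hφb, hφb0, hφbd⟩ := exists_smooth_flow (fun x => l x • B x) (hls.smul hB)
  obtain ⟨δw, hδw, φw, hφw, hφw0, hφwd⟩ := exists_smooth_flow (fun x => m x • e₁)
    (hms.smul contDiff_const)
  set α : (Fin 3 → ℝ) → ℝ × (Fin 3 → ℝ) := fun q => (q 0, q 1 • e₂) with hα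
  set σ : (Fin 3 → ℝ) → (Fin 3 → ℝ) := fun q => φw (α q) with hσ
  set β : (Fin 3 → ℝ) → ℝ × (Fin 3 → ℝ) := fun q => (q 2, σ q) with hβ
  set χ : (Fin 3 → ℝ) → (Fin 3 → ℝ) := fun q => φb (β q) with hχ
  have hαs : ContDiff ℝ (⊤ : ℕ∞) α := by
    simp only [hα]; fun_prop
  have hα0 : α 0 = 0 := by simp [hα]
  have hσ0 : σ 0 = 0 := by
    simp only [hσ, hα0]; exact hφw0 0 (Metric.mem_ball_self hδw)
  have hβ0 : β 0 = 0 := by simp [hβ, hσ0]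
  have hχ0 : χ 0 = 0 := by
    simp only [hχ, hβ0]; exact hφb0 0 (Metric.mem_ball_self hδb)
  have hσat : ∀ q, α q ∈ Metric.ball 0 δw → ContDiffAt ℝ (⊤ : ℕ∞) σ q := fun q hq =>
    (hφw.contDiffAt (Metric.isOpen_ball.mem_nhds hq)).comp q hαs.contDiffAt
  have hβat : ∀ q, α q ∈ Metric.ball 0 δw → ContDiffAt ℝ (⊤ : ℕ∞) β q := fun q hq =>
    (contDiff_apply ℝ ℝ (2 : Fin 3)).contDiffAt.prodMk (hσat q hq)
  have hχat : ∀ q, α q ∈ Metric.ball 0 δw → β q ∈ Metric.ball 0 δb →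
      ContDiffAt ℝ (⊤ : ℕ∞) χ q := fun q hq hq' =>
    (hφb.contDiffAt (Metric.isOpen_ball.mem_nhds hq')).comp q (hβat q hq)
  have hαb0 : α 0 ∈ Metric.ball 0 δw := by rw [hα0]; exact Metric.mem_ball_self hδw
  have hβb0 : β 0 ∈ Metric.ball 0 δb := by rw [hβ0]; exact Metric.mem_ball_self hδb
  have ev1 : ∀ᶠ q in nhds 0, α q ∈ Metric.ball 0 δw :=
    hαs.continuous.continuousAt.eventually_mem (Metric.isOpen_ball.mem_nhds hαb0)
  have ev2 : ∀ᶠ q in nhds 0, β q ∈ Metric.ball 0 δb :=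
    (hβat 0 hαb0).continuousAt.eventually_mem (Metric.isOpen_ball.mem_nhds hβb0)
  have ev3 : ∀ᶠ q in nhds 0, 2 * N 0 / 3 < N (χ q) := by
    have hc : ContinuousAt (fun q => N (χ q)) 0 :=
      hNs.continuous.continuousAt.comp (hχat 0 hαb0 hβb0).continuousAt
    refine hc.eventually_const_lt ?_
    simp only [hχ0]; linarith
  have ev4 : ∀ᶠ q in nhds 0, 2 * g 0 ^ 2 / 3 < g (σ q) ^ 2 := by
    have hc : ContinuousAt (fun q => g (σ q) ^ 2) 0 :=
      (hgs.continuous.continuousAt.comp (hσat 0 hαb0).continuousAt).pow 2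
    refine hc.eventually_const_lt ?_
    simp only [hσ0]; linarith
  obtain ⟨ε, hε, hball⟩ := Metric.eventually_nhds_iff_ball.1 (ev1.and (ev2.and (ev3.and ev4)))
  have hχs : ∀ q ∈ Metric.ball (0 : Fin 3 → ℝ) ε, ContDiffAt ℝ (⊤ : ℕ∞) χ q := fun q hq =>
    hχat q (hball q hq).1 (hball q hq).2.1
  have hline : ∀ (q : Fin 3 → ℝ) (i : Fin 3), HasDerivAt
      (fun s : ℝ => q + s • (Pi.single i 1 : Fin 3 → ℝ)) (Pi.single i 1) 0 := fun q i => by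
    simpa using ((hasDerivAt_id (0 : ℝ)).smul_const (Pi.single i 1 : Fin 3 → ℝ)).const_add q
  have hdir : ∀ (f : (Fin 3 → ℝ) → (Fin 3 → ℝ)) (q : Fin 3 → ℝ) (i : Fin 3),
      DifferentiableAt ℝ f q → HasDerivAt
        (fun s : ℝ => f (q + s • (Pi.single i 1 : Fin 3 → ℝ))) (fderiv ℝ f q (Pi.single i 1)) 0 := by
    intro f q i hf
    have h1 : HasFDerivAt f (fderiv ℝ f q) (q + (0 : ℝ) • (Pi.single i 1 : Fin 3 → ℝ)) := by
      simpa using hf.hasFDerivAt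
    exact h1.comp_hasDerivAt 0 (hline q i)
  -- the third derivative
  have hd2 : ∀ q ∈ Metric.ball (0 : Fin 3 → ℝ) ε,
      fderiv ℝ χ q (Pi.single 2 1) = l (χ q) • B (χ q) := by
    intro q hq
    have h1 := hdir χ q 2 ((hχs q hq).differentiableAt (by simp))
    have h2 : HasDerivAt (fun t => φb (t, σ q)) (l (χ q) • B (χ q)) (q 2 + 0) := by
      rw [add_zero]; exact hφbd (β q) (hball q hq).2.1
    have h3 := HasDerivAt.comp_const_add (q 2) 0 h2
    refine h1.unique (h3.congr_of_eventuallyEq (Filter.Eventually.of_forall fun s => ?_))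
    simp [hχ, hβ, hσ, hα]
  -- derivatives of the section
  have hs0 : ∀ q ∈ Metric.ball (0 : Fin 3 → ℝ) ε,
      fderiv ℝ σ q (Pi.single 0 1) = m (σ q) • e₁ := by
    intro q hq
    have h1 := hdir σ q 0 ((hσat q (hball q hq).1).differentiableAt (by simp))
    have h2 : HasDerivAt (fun t => φw (t, q 1 • e₂)) (m (σ q) • e₁) (q 0 + 0) := by
      rw [add_zero]; exact hφwd (α q) (hball q hq).1
    have h3 := HasDerivAt.comp_const_add (q 0) 0 h2
    refine h1.unique (h3.congr_of_eventuallyEq (Filter.Eventually.of_forall fun s => ?_))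
    simp [hσ, hα]
  let Lc : (Fin 3 → ℝ) →L[ℝ] (Fin 3 → ℝ) := (crossProduct e₁).toContinuousLinearMap
  have hLc : ∀ x, Lc x = crossProduct e₁ x := fun x => rfl
  have hcross : ∀ q ∈ Metric.ball (0 : Fin 3 → ℝ) ε, Lc (σ q) = q 1 • Lc e₂ := by
    intro q hq
    have hαq := (hball q hq).1
    have hz : ∀ s ∈ Set.uIcc 0 (q 0), HasDerivAt (fun t => Lc (φw (t, q 1 • e₂))) 0 s := by
      intro s hs
      have habs : |s| ≤ |q 0| := by
        have := Set.abs_sub_left_of_mem_uIcc hs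
        simpa using this
      have hmem : (s, q 1 • e₂) ∈ Metric.ball (0 : ℝ × (Fin 3 → ℝ)) δw := by
        rw [mem_ball_zero_iff] at hαq ⊢
        refine lt_of_le_of_lt ?_ hαq
        rw [Prod.norm_def, Prod.norm_def]
        exact max_le_max habs le_rfl
      have h1 := Lc.hasFDerivAt.comp_hasDerivAt s (hφwd _ hmem)
      refine h1.congr_deriv ?_
      rw [map_smul, hLc, cross_self, smul_zero]
    have h1 := eq_of_hasDerivAt_zero _ (q 0) hz
    have h2 : q 1 • e₂ ∈ Metric.ball (0 : Fin 3 → ℝ) δw := by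
      rw [mem_ball_zero_iff] at hαq ⊢
      exact (norm_snd_le (α q)).trans_lt hαq
    rw [hφw0 _ h2, map_smul] at h1
    exact h1
  have hs1 : ∀ q ∈ Metric.ball (0 : Fin 3 → ℝ) ε,
      crossProduct e₁ (fderiv ℝ σ q (Pi.single 1 1)) = crossProduct e₁ e₂ := by
    intro q hq
    have h1 := hdir σ q 1 ((hσat q (hball q hq).1).differentiableAt (by simp))
    have h2 := Lc.hasFDerivAt.comp_hasDerivAt 0 h1
    have hev : ∀ᶠ s in nhds (0 : ℝ), q + s • (Pi.single 1 1 : Fin 3 → ℝ) ∈ Metric.ball 0 ε := by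
      refine (hline q 1).continuousAt.eventually_mem ?_
      simpa using Metric.isOpen_ball.mem_nhds hq
    have h3 : HasDerivAt (fun s : ℝ => (q 1 + s) • Lc e₂) (Lc e₂) 0 := by
      simpa using ((hasDerivAt_id (0 : ℝ)).const_add (q 1)).smul_const (Lc e₂)
    refine h2.unique (h3.congr_of_eventuallyEq ?_)
    filter_upwards [hev] with s hs
    have := hcross _ hs
    simpa using this
  -- the normalization on the section
  have hsec : ∀ q ∈ Metric.ball (0 : Fin 3 → ℝ) ε, q 2 = 0 →
      trip (fderiv ℝ χ q (Pi.single 0 1)) (fderiv ℝ χ q (Pi.single 1 1)) (B (χ q)) = 1 := by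
    intro q hq hq2
    have hχσ : ∀ p ∈ Metric.ball (0 : Fin 3 → ℝ) ε, p 2 = 0 → χ p = σ p := by
      intro p hp hp2
      have h1 := (hball p hp).2.1
      have h2 : σ p ∈ Metric.ball (0 : Fin 3 → ℝ) δb := by
        rw [mem_ball_zero_iff] at h1 ⊢
        exact (norm_snd_le (β p)).trans_lt h1
      have h3 : β p = (0, σ p) := by simp [hβ, hp2]
      simp only [hχ, h3]
      exact hφb0 _ h2
    have hdd : ∀ i : Fin 3, i ≠ 2 →
        fderiv ℝ χ q (Pi.single i 1) = fderiv ℝ σ q (Pi.single i 1) := by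
      intro i hi
      have h1 := hdir χ q i ((hχs q hq).differentiableAt (by simp))
      have h2 := hdir σ q i ((hσat q (hball q hq).1).differentiableAt (by simp))
      refine h1.unique (h2.congr_of_eventuallyEq ?_)
      have hev : ∀ᶠ s in nhds (0 : ℝ), q + s • (Pi.single i 1 : Fin 3 → ℝ) ∈ Metric.ball 0 ε := by
        refine (hline q i).continuousAt.eventually_mem ?_
        simpa using Metric.isOpen_ball.mem_nhds hq
      filter_upwards [hev] with s hs
      refine hχσ _ hs ?_
      simp [hq2, hi.symm]
    rw [hdd 0 (by decide), hdd 1 (by decide), hχσ q hq hq2, hs0 q hq]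
    have hc := hs1 q hq
    set X := fderiv ℝ σ q (Pi.single 1 1) with hX
    have hmg : m (σ q) * g (σ q) = 1 := by
      have h4 := (hball q hq).2.2.2
      have h5 : 0 < g (σ q) ^ 2 := by linarith
      simp only [hm]
      rw [modId_eq hg0 h4]
      have : g (σ q) ≠ 0 := fun h => by simp [h] at h5
      field_simp
    have hge : g (σ q) = trip e₁ e₂ (B (σ q)) := rfl
    have c0 := congrFun hc 0
    have c1 := congrFun hc 1
    have c2 := congrFun hc 2
    simp [cross_apply] at c0 c1 c2
    rw [hge] at hmg
    rw [← hmg]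
    simp only [trip_eq, Pi.smul_apply, smul_eq_mul]
    linear_combination m (σ q) * (B (σ q) 0 * c0 + B (σ q) 1 * c1 + B (σ q) 2 * c2)
  refine ⟨ε, hε, χ, hχ0, fun q hq => (hχs q hq).contDiffWithinAt, fun q hq => ⟨?_, ?_, ?_⟩⟩
  · intro h
    have h3 := (hball q hq).2.2.1
    have : N (χ q) = 0 := by simp [hN, h]
    linarith
  · rw [hd2 q hq]
    have h3 := (hball q hq).2.2.1
    simp only [hl]
    rw [modId_eq hN0 h3]
    rfl
  · set q' : Fin 3 → ℝ := q + (-q 2) • (Pi.single 2 1 : Fin 3 → ℝ) with hq'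
    have hmem : ∀ s ∈ Set.uIcc 0 (q 2),
        q' + s • (Pi.single 2 1 : Fin 3 → ℝ) ∈ Metric.ball (0 : Fin 3 → ℝ) ε := by
      intro s hs
      have habs : |s| ≤ |q 2| := by
        have := Set.abs_sub_left_of_mem_uIcc hs
        simpa using this
      rw [mem_ball_zero_iff] at hq ⊢
      refine lt_of_le_of_lt ?_ hq
      rw [pi_norm_le_iff_of_nonneg (norm_nonneg _)]
      intro i
      fin_cases i
      · simpa [hq'] using norm_le_pi_norm q 0
      · simpa [hq'] using norm_le_pi_norm q 1
      · simpa [hq'] using habs.trans (norm_le_pi_norm q 2)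
    have hz := eq_of_hasDerivAt_zero _ (q 2) (fun s hs =>
      hasDerivAt_trip_zero B hB hdiv l hls _ Metric.isOpen_ball χ
        (fun q hq => (hχs q hq).contDiffWithinAt) (Pi.single 2 1) hd2
        (Pi.single 0 1) (Pi.single 1 1) q' s (hmem s hs))
    have e1 : q' + q 2 • (Pi.single 2 1 : Fin 3 → ℝ) = q := by simp [hq']
    have e2 : q' + (0 : ℝ) • (Pi.single 2 1 : Fin 3 → ℝ) = q' := by simp
    simp only [e1, e2] at hz
    rw [hz]
    refine hsec q' ?_ (by simp [hq'])
    have := hmem 0 Set.left_mem_uIcc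
    rwa [e2] at this

/-- Existence of local coordinates straightening the magnetic field direction and
normalizing the magnetic two-form: if `B(0) = (∇×A)(0) ≠ 0`, there is a local smooth
diffeomorphism `χ` between neighborhoods of `0` with `χ(0) = 0`, `∂₃χ = (B/‖B‖)∘χ`, and
`χ*(dα) = dq̂₁ ∧ dq̂₂`, where `dα_q(U,V) = ⟨U, V × B(q)⟩`. -/
theorem statement2 (A : (Fin 3 → ℝ) → (Fin 3 → ℝ)) (hA : ContDiff ℝ (⊤ : ℕ∞) A)
    (hB0 : curl A 0 ≠ 0) :
    ∃ U V : Set (Fin 3 → ℝ), IsOpen U ∧ IsOpen V ∧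
      (0 : Fin 3 → ℝ) ∈ U ∧ (0 : Fin 3 → ℝ) ∈ V ∧
      ∃ χ ψ : (Fin 3 → ℝ) → (Fin 3 → ℝ),
        χ 0 = 0 ∧
        ContDiffOn ℝ (⊤ : ℕ∞) χ U ∧ ContDiffOn ℝ (⊤ : ℕ∞) ψ V ∧
        Set.BijOn χ U V ∧ (∀ q ∈ U, ψ (χ q) = q) ∧ (∀ q ∈ V, χ (ψ q) = q) ∧
        ∀ qh ∈ U,
          (fderiv ℝ χ qh (Pi.single 2 1) = (norm3 (curl A (χ qh)))⁻¹ • curl A (χ qh)) ∧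
          ∀ u v : Fin 3 → ℝ,
            (fderiv ℝ χ qh u) ⬝ᵥ crossProduct (fderiv ℝ χ qh v) (curl A (χ qh)) =
              u 0 * v 1 - u 1 * v 0 := by
  have hB := contDiff_curl A hA
  obtain ⟨ε, hε, χ, hχ0, hχs, hχ⟩ := exists_coordinates (curl A) hB (div_curl A hA) hB0
  have hform : ∀ q ∈ Metric.ball (0 : Fin 3 → ℝ) ε, ∀ u v : Fin 3 → ℝ,
      trip (fderiv ℝ χ q u) (fderiv ℝ χ q v) (curl A (χ q)) = u 0 * v 1 - u 1 * v 0 := by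
    intro q hq u v
    obtain ⟨-, h2, h3⟩ := hχ q hq
    rw [clm_expand _ u, clm_expand _ v, h2]
    simp only [trip_eq, Pi.add_apply, Pi.smul_apply, smul_eq_mul] at h3 ⊢
    linear_combination (u 0 * v 1 - u 1 * v 0) * h3
  have h0 : (0 : Fin 3 → ℝ) ∈ Metric.ball (0 : Fin 3 → ℝ) ε := Metric.mem_ball_self hε
  have hinj : Function.Injective (fderiv ℝ χ 0 : (Fin 3 → ℝ) →ₗ[ℝ] (Fin 3 → ℝ)) := by
    rw [← LinearMap.ker_eq_bot, LinearMap.ker_eq_bot']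
    intro u hu
    replace hu : fderiv ℝ χ 0 u = 0 := hu
    have ha := hform 0 h0 u (Pi.single 1 1)
    have hb := hform 0 h0 u (Pi.single 0 1)
    rw [hu] at ha hb
    have hu0 : u 0 = 0 := by simpa [trip] using ha.symm
    have hu1 : u 1 = 0 := by simpa [trip] using hb.symm
    obtain ⟨h1, h2, -⟩ := hχ 0 h0
    rw [clm_expand, hu0, hu1, h2] at hu
    have hn : norm3 (curl A (χ 0)) ≠ 0 := by
      intro h
      apply h1
      unfold norm3 at h
      have hnn : 0 ≤ curl A (χ 0) ⬝ᵥ curl A (χ 0) := by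
        simp only [dotProduct, Fin.sum_univ_three]
        nlinarith [mul_self_nonneg (curl A (χ 0) 0), mul_self_nonneg (curl A (χ 0) 1),
          mul_self_nonneg (curl A (χ 0) 2)]
      exact dotProduct_self_eq_zero.1 ((Real.sqrt_eq_zero hnn).1 h)
    have hu2 : u 2 = 0 := by
      simpa [hn, h1] using hu
    ext i; fin_cases i
    · exact hu0
    · exact hu1
    · exact hu2
  obtain ⟨P, hPc, hP0, hPW, hPs⟩ := exists_smooth_local_inverse χ _ Metric.isOpen_ball hχs 0 h0
    (LinearEquiv.ofInjectiveEndo _ hinj).toContinuousLinearEquiv (by ext; simp)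
  refine ⟨P.source, P.target, P.open_source, P.open_target, hP0, ?_, χ, P.symm, hχ0,
    hχs.mono hPW, fun y hy => (hPs y hy).contDiffWithinAt, ?_, ?_, ?_, ?_⟩
  · have := P.map_source hP0
    rwa [hPc, hχ0] at this
  · rw [← hPc]; exact P.bijOn
  · intro q hq
    have := P.left_inv hq
    rwa [hPc] at this
  · intro q hq
    have := P.right_inv hq
    rwa [hPc] at this
  · intro q hq
    exact ⟨(hχ q (hPW hq)).2.1, hform q (hPW hq)⟩
end
end

section
/- Let A : ℝ³ → ℝ³ be a smooth vector potential with magnetic field B = ∇×A, let q ∈ ℝ³ with B(q) ≠ 0, and let (b, c, d) be a direct (positively oriented) orthonormal basis of ℝ³ with b = B(q)/‖B(q)‖. Define f₄ = ‖B(q)‖^{-1/2}(c, DA(q)ᵀc) and f₅ = ‖B(q)‖^{-1/2}(d, DA(q)ᵀd) in ℝ³×ℝ³. Then ω₀(f₄, f₅) = −1. -/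
open Matrix

noncomputable section

/-- With `B(q) = (∇×A)(q) ≠ 0` and a direct orthonormal basis `(b,c,d)`, `b = B(q)/‖B(q)‖`,
the vectors `f₄ = ‖B(q)‖^{-1/2}(c, DA(q)ᵀc)` and `f₅ = ‖B(q)‖^{-1/2}(d, DA(q)ᵀd)` satisfy
`ω₀(f₄,f₅) = −1`. -/
theorem statement5 (A : (Fin 3 → ℝ) → (Fin 3 → ℝ)) (hA : ContDiff ℝ (⊤ : ℕ∞) A)
    (q : Fin 3 → ℝ) (hBq : curl A q ≠ 0)
    (b c d : Fin 3 → ℝ) (hb : b = (norm3 (curl A q))⁻¹ • curl A q)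
    (hcc : c ⬝ᵥ c = 1) (hdd : d ⬝ᵥ d = 1)
    (hbc : b ⬝ᵥ c = 0) (hbd : b ⬝ᵥ d = 0) (hcd : c ⬝ᵥ d = 0)
    (hdirect : b ⬝ᵥ crossProduct c d = 1) :
    omega0 (((norm3 (curl A q)) ^ (-(1 : ℝ)/2)) • (c, adjoint3 (fderiv ℝ A q) c))
        (((norm3 (curl A q)) ^ (-(1 : ℝ)/2)) • (d, adjoint3 (fderiv ℝ A q) d)) = -1 := by
  have hd : DifferentiableAt ℝ A q := hA.contDiffAt.differentiableAt (by simp)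
  have hcomp : ∀ i v, fderiv ℝ (fun x => A x i) q v = fderiv ℝ A q v i := by
    intro i v
    have h := (hasFDerivAt_pi'.1 hd.hasFDerivAt) i
    rw [h.fderiv]
    rfl
  have hpos : 0 < norm3 (curl A q) := by
    unfold norm3
    apply Real.sqrt_pos.2
    have h0 : 0 ≤ curl A q ⬝ᵥ curl A q :=
      Finset.sum_nonneg (fun i _ => mul_self_nonneg _)
    exact lt_of_le_of_ne h0 (fun h => hBq (dotProduct_self_eq_zero.1 h.symm))
  have hB : curl A q ⬝ᵥ crossProduct c d = norm3 (curl A q) := by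
    rw [hb, smul_dotProduct, smul_eq_mul, inv_mul_eq_one₀ hpos.ne'] at hdirect
    exact hdirect.symm
  have hr : (norm3 (curl A q)) ^ (-(1 : ℝ)/2) * (norm3 (curl A q)) ^ (-(1 : ℝ)/2)
      * norm3 (curl A q) = 1 := by
    rw [← Real.rpow_add hpos]
    norm_num
    rw [Real.rpow_neg_one, inv_mul_cancel₀ hpos.ne']
  have key : d ⬝ᵥ adjoint3 (fderiv ℝ A q) c - adjoint3 (fderiv ℝ A q) d ⬝ᵥ c
      = - (curl A q ⬝ᵥ crossProduct c d) := by
    simp only [curl, hcomp, adjoint3, cross_apply, dotProduct, Fin.sum_univ_three,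
      Matrix.cons_val]
    ring
  rw [hB] at key
  simp only [omega0, Prod.smul_fst, Prod.smul_snd, smul_dotProduct, dotProduct_smul, smul_eq_mul]
  linear_combination (norm3 (curl A q)) ^ (-(1 : ℝ)/2) * (norm3 (curl A q)) ^ (-(1 : ℝ)/2) * key - hr
end
end

section
/- Let A : ℝ³ → ℝ³ be a smooth vector potential with nonvanishing magnetic field B = ∇×A on an open set, b = B/‖B‖, and let χ be a smooth local diffeomorphism satisfying ∂₃χ(q̂) = b(χ(q̂)) and dα_{χ(q̂)}(Dχ(q̂)u, Dχ(q̂)v) = u₁v₂ − u₂v₁ for all u,v ∈ ℝ³. Define, at q = χ(q̂), the tangent frame f_j = (Dχ(q̂)e_j, DA(q)Dχ(q̂)e_j) for j = 1,2,3, where (e₁,e₂,e₃) is the canonical basis of ℝ³. Then ω₀(f₁, f₂) = 1 and ω₀(f₁, f₃) = ω₀(f₂, f₃) = 0. -/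
open Matrix

noncomputable section

/-- The tangent frame `f_j = (Dχ(q̂)e_j, DA(χ(q̂))Dχ(q̂)e_j)` of the characteristic
manifold `Σ` in the straightened coordinates. -/
def tangentFrame (A χ : (Fin 3 → ℝ) → (Fin 3 → ℝ)) (qh : Fin 3 → ℝ) (j : Fin 3) :
    (Fin 3 → ℝ) × (Fin 3 → ℝ) :=
  (fderiv ℝ χ qh (Pi.single j 1), fderiv ℝ A (χ qh) (fderiv ℝ χ qh (Pi.single j 1)))

/-- On the graph of `DA`, the form `ω₀` restricts to the magnetic two-form. -/
theorem omega0_graph (A : (Fin 3 → ℝ) → (Fin 3 → ℝ)) (hA : Differentiable ℝ A)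
    (q u v : Fin 3 → ℝ) :
    omega0 (u, fderiv ℝ A q u) (v, fderiv ℝ A q v) = u ⬝ᵥ crossProduct v (curl A q) := by
  have hc : ∀ i w, fderiv ℝ (fun x => A x i) q w = fderiv ℝ A q w i := by
    intro i w
    rw [fderiv_apply (hA q) i]
    rfl
  have hl : ∀ w, fderiv ℝ A q w = w 0 • fderiv ℝ A q (Pi.single 0 1)
      + w 1 • fderiv ℝ A q (Pi.single 1 1) + w 2 • fderiv ℝ A q (Pi.single 2 1) := by
    intro w
    rw [← map_smul, ← map_smul, ← map_smul, ← map_add, ← map_add]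
    congr 1
    ext i
    fin_cases i <;> simp
  simp only [omega0, curl, hc]
  rw [hl u, hl v]
  simp [cross_apply, dotProduct, Fin.sum_univ_three]
  ring

/-- In straightened coordinates (`∂₃χ = (B/‖B‖)∘χ`, `χ*(dα) = dq̂₁∧dq̂₂`), the tangent
frame `f_j = (Dχ e_j, DA Dχ e_j)` of `Σ` satisfies `ω₀(f₁,f₂) = 1` and
`ω₀(f₁,f₃) = ω₀(f₂,f₃) = 0`. -/
theorem statement7 (A : (Fin 3 → ℝ) → (Fin 3 → ℝ)) (hA : ContDiff ℝ (⊤ : ℕ∞) A)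
    (Ω : Set (Fin 3 → ℝ)) (hΩ : IsOpen Ω) (hB : ∀ q ∈ Ω, curl A q ≠ 0)
    (U : Set (Fin 3 → ℝ)) (hU : IsOpen U)
    (χ : (Fin 3 → ℝ) → (Fin 3 → ℝ)) (hχ : ContDiffOn ℝ (⊤ : ℕ∞) χ U)
    (hmaps : Set.MapsTo χ U Ω)
    (hinv : ∀ qh ∈ U, Function.Bijective (fderiv ℝ χ qh))
    (hfield : ∀ qh ∈ U,
      fderiv ℝ χ qh (Pi.single 2 1) = (norm3 (curl A (χ qh)))⁻¹ • curl A (χ qh))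
    (hsymp : ∀ qh ∈ U, ∀ u v : Fin 3 → ℝ,
      (fderiv ℝ χ qh u) ⬝ᵥ crossProduct (fderiv ℝ χ qh v) (curl A (χ qh)) =
        u 0 * v 1 - u 1 * v 0) :
    ∀ qh ∈ U,
      omega0 (tangentFrame A χ qh 0) (tangentFrame A χ qh 1) = 1 ∧
      omega0 (tangentFrame A χ qh 0) (tangentFrame A χ qh 2) = 0 ∧
      omega0 (tangentFrame A χ qh 1) (tangentFrame A χ qh 2) = 0 := by
  intro qh hq
  have h01 := hsymp qh hq (Pi.single 0 1) (Pi.single 1 1)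
  have h02 := hsymp qh hq (Pi.single 0 1) (Pi.single 2 1)
  have h12 := hsymp qh hq (Pi.single 1 1) (Pi.single 2 1)
  rw [← omega0_graph A (hA.differentiable (by simp))] at h01 h02 h12
  refine ⟨?_, ?_, ?_⟩
  · simpa [tangentFrame] using h01
  · simpa [tangentFrame] using h02
  · simpa [tangentFrame] using h12
end
end

section
/- Let ν : ℝ² → (0,∞) be smooth, set γ = ln ν, and define C : ℝ⁴ → ℝ⁴ (coordinates (x₂,ξ₂,x₃,ξ₃)) by C(x₂,ξ₂,x₃,ξ₃) = (x₂ + ∂_{ξ₂}γ(x₂,ξ₂) x₃ξ₃, ξ₂ − ∂_{x₂}γ(x₂,ξ₂) x₃ξ₃, ν(x₂,ξ₂)x₃, ν(x₂,ξ₂)^{-1}ξ₃). Then at every point p with x₃ = 0 and ξ₃ = 0, the Jacobian determinant of C equals 1 (in particular DC(p) is invertible), and ω₀(DC(p)u, DC(p)v) = ω₀(u,v) for all u, v ∈ ℝ⁴. -/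
noncomputable section

/-- The canonical symplectic form on `ℝ⁴` with coordinates `(x₂,ξ₂,x₃,ξ₃)`:
`ω₀((a,b,c,d),(a',b',c',d')) = a'b − ab' + c'd − cd'`. -/
def omega4 (u v : ℝ × ℝ × ℝ × ℝ) : ℝ :=
  v.1 * u.2.1 - u.1 * v.2.1 + v.2.2.1 * u.2.2.2 - u.2.2.1 * v.2.2.2

/-- With `ν > 0` smooth and `γ = ln ν`, the map
`C(x₂,ξ₂,x₃,ξ₃) = (x₂ + ∂_{ξ₂}γ·x₃ξ₃, ξ₂ − ∂_{x₂}γ·x₃ξ₃, νx₃, ν⁻¹ξ₃)` has Jacobian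
determinant `1` at each point with `x₃ = ξ₃ = 0`, and its differential there preserves the
canonical symplectic form. -/
theorem statement13 (ν : ℝ × ℝ → ℝ) (hν : ContDiff ℝ (⊤ : ℕ∞) ν) (hνpos : ∀ p, 0 < ν p)
    (C : ℝ × ℝ × ℝ × ℝ → ℝ × ℝ × ℝ × ℝ)
    (hC : ∀ x : ℝ × ℝ × ℝ × ℝ, C x =
      (x.1 + fderiv ℝ (fun p => Real.log (ν p)) (x.1, x.2.1) ((0, 1) : ℝ × ℝ) *
          (x.2.2.1 * x.2.2.2),
       x.2.1 - fderiv ℝ (fun p => Real.log (ν p)) (x.1, x.2.1) ((1, 0) : ℝ × ℝ) *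
          (x.2.2.1 * x.2.2.2),
       ν (x.1, x.2.1) * x.2.2.1,
       (ν (x.1, x.2.1))⁻¹ * x.2.2.2))
    (p : ℝ × ℝ × ℝ × ℝ) (hp3 : p.2.2.1 = 0) (hp4 : p.2.2.2 = 0) :
    LinearMap.det ((fderiv ℝ C p).toLinearMap) = 1 ∧
    ∀ u v : ℝ × ℝ × ℝ × ℝ,
      omega4 (fderiv ℝ C p u) (fderiv ℝ C p v) = omega4 u v := by
  have hd : Differentiable ℝ ν := hν.differentiable (by simp)
  have hg : ContDiff ℝ (⊤ : ℕ∞) (fun p => Real.log (ν p)) :=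
    hν.log (fun x => (hνpos x).ne')
  have hg' : Differentiable ℝ (fderiv ℝ (fun p => Real.log (ν p))) :=
    (hg.fderiv_right (m := 1) (by norm_cast)).differentiable (by simp)
  have hn : ν (p.1, p.2.1) ≠ 0 := (hνpos _).ne'
  have h1 : HasFDerivAt (fun x : ℝ × ℝ × ℝ × ℝ => x.1)
      (ContinuousLinearMap.fst ℝ ℝ (ℝ × ℝ × ℝ)) p := hasFDerivAt_fst
  have h2' : HasFDerivAt (fun x : ℝ × ℝ × ℝ × ℝ => x.2)
      (ContinuousLinearMap.snd ℝ ℝ (ℝ × ℝ × ℝ)) p := hasFDerivAt_snd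
  have h2 := h2'.fst
  have h3 := h2'.snd.fst
  have h4 := h2'.snd.snd
  have h34 := h3.mul h4
  have h12 : DifferentiableAt ℝ (fun x : ℝ × ℝ × ℝ × ℝ => (x.1, x.2.1)) p := by fun_prop
  have ha (w : ℝ × ℝ) : DifferentiableAt ℝ (fun x : ℝ × ℝ × ℝ × ℝ =>
      fderiv ℝ (fun p => Real.log (ν p)) (x.1, x.2.1) w) p :=
    ((hg' _).comp p h12).clm_apply (differentiableAt_const w)
  have hv : DifferentiableAt ℝ (fun x : ℝ × ℝ × ℝ × ℝ => ν (x.1, x.2.1)) p :=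
    (hd _).comp p h12
  have hi : DifferentiableAt ℝ (fun x : ℝ × ℝ × ℝ × ℝ => (ν (x.1, x.2.1))⁻¹) p :=
    hv.inv hn
  have hD := (h1.add ((ha (0, 1)).hasFDerivAt.mul h34)).prodMk
    ((h2.sub ((ha (1, 0)).hasFDerivAt.mul h34)).prodMk
      ((hv.hasFDerivAt.mul h3).prodMk (hi.hasFDerivAt.mul h4)))
  have hD2 := (hD.congr_of_eventuallyEq (Filter.Eventually.of_forall hC)).fderiv
  have key : ∀ u, fderiv ℝ C p u =
      (u.1, u.2.1, ν (p.1, p.2.1) * u.2.2.1, (ν (p.1, p.2.1))⁻¹ * u.2.2.2) := by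
    intro u
    rw [hD2]
    simp [hp3, hp4]
  constructor
  · have : (fderiv ℝ C p).toLinearMap =
        (LinearMap.id : ℝ →ₗ[ℝ] ℝ).prodMap ((LinearMap.id : ℝ →ₗ[ℝ] ℝ).prodMap
          ((ν (p.1, p.2.1) • (LinearMap.id : ℝ →ₗ[ℝ] ℝ)).prodMap
            ((ν (p.1, p.2.1))⁻¹ • (LinearMap.id : ℝ →ₗ[ℝ] ℝ)))) := by
      apply LinearMap.ext
      intro u
      simpa using key u
    rw [this, LinearMap.det_prodMap, LinearMap.det_prodMap, LinearMap.det_prodMap]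
    simp [hn]
  · intro u v
    rw [key, key]
    simp only [omega4]
    field_simp
end
end

section
/- Let k : ℝ² → ℝ be a smooth function such that k(h,Z) = O((h² + |Z|)^{3/2}) as (h,Z) → (0,0). Then k(0,0) = 0, ∂₁k(0,0) = 0, ∂₂k(0,0) = 0 and ∂₁²k(0,0) = 0 (where ∂₁, ∂₂ denote partial derivatives in h and Z respectively). -/
noncomputable section

lemma aux_deriv (f φ : ℝ → ℝ) (C ε : ℝ) (hε : 0 < ε) (hφ : Filter.Tendsto φ (nhds 0) (nhds 0))
    (hf0 : f 0 = 0) (hf : ∀ x, |x| < ε → |f x| ≤ C * (|x| * |φ x|)) : HasDerivAt f 0 0 := by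
  rw [hasDerivAt_iff_isLittleO]
  have h1 : f =O[nhds 0] (fun x => x * φ x) := by
    refine Asymptotics.IsBigO.of_bound C ?_
    filter_upwards [Metric.ball_mem_nhds (0:ℝ) hε] with x hx
    have hx' : |x| < ε := by simpa using hx
    simpa [Real.norm_eq_abs, abs_mul] using hf x hx'
  have h2 : (fun x => x * φ x) =o[nhds 0] (fun x : ℝ => x * (1:ℝ)) :=
    (Asymptotics.isBigO_refl (fun x : ℝ => x) (nhds 0)).mul_isLittleO
      ((Asymptotics.isLittleO_one_iff ℝ).2 hφ)
  simpa [hf0] using h1.trans_isLittleO h2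

lemma aux_le (g : ℝ → ℝ) (hg : ContDiff ℝ 2 g) (C ε : ℝ) (hC : 0 < C) (hε : 0 < ε)
    (hb : ∀ x, |x| < ε → |g x| ≤ C * |x| ^ 3) (h0 : g 0 = 0) (h1 : deriv g 0 = 0) :
    deriv (deriv g) 0 ≤ 0 := by
  by_contra! ha
  set a := deriv (deriv g) 0 with hadef
  have hgd : Differentiable ℝ g := hg.differentiable (by norm_num)
  have hg1 : ContDiff ℝ 1 (deriv g) := by
    have : ContDiff ℝ (1 + 1) g := by convert hg using 1; norm_num
    exact (contDiff_succ_iff_deriv.1 this).2.2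
  have hgdd : Differentiable ℝ (deriv g) := hg1.differentiable (by norm_num)
  have hd : deriv (fun x => g x - a / 4 * x ^ 2) = fun x => deriv g x - a / 2 * x := by
    funext x
    have := (hgd x).hasDerivAt.sub ((hasDerivAt_pow 2 x).const_mul (a / 4))
    refine this.deriv.trans ?_
    push_cast
    ring
  have hdd : deriv (deriv (fun x => g x - a / 4 * x ^ 2)) 0 = a / 2 := by
    rw [hd]
    have := (hgdd 0).hasDerivAt.sub ((hasDerivAt_id (0:ℝ)).const_mul (a / 2))
    refine this.deriv.trans ?_
    rw [← hadef]; ring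
  have hmin := isLocalMin_of_deriv_deriv_pos (f := fun x => g x - a / 4 * x ^ 2) (x₀ := 0)
    (by rw [hdd]; positivity) (by rw [hd]; simp [h1])
    (by have := hg.continuous; fun_prop)
  obtain ⟨δ, hδ, hball⟩ := Metric.eventually_nhds_iff.1 hmin
  obtain ⟨t, ht0, ht⟩ := exists_between (lt_min (lt_min hδ hε) (show 0 < a / (4 * C) by positivity))
  have ht1 : t < δ := ht.trans_le ((min_le_left _ _).trans (min_le_left _ _))
  have ht2 : t < ε := ht.trans_le ((min_le_left _ _).trans (min_le_right _ _))
  have ht3 : t < a / (4 * C) := ht.trans_le (min_le_right _ _)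
  have e1 := @hball t (by simpa [abs_of_pos ht0] using ht1)
  have e2 := (le_abs_self _).trans (hb t (by simpa [abs_of_pos ht0] using ht2))
  rw [abs_of_pos ht0] at e2
  rw [lt_div_iff₀ (by positivity)] at ht3
  simp only [h0] at e1
  nlinarith [pow_pos ht0 2]

/-- If `k` is smooth with `k(h,Z) = O((h² + |Z|)^{3/2})` near `(0,0)`, then `k(0,0) = 0`,
`∂₁k(0,0) = ∂₂k(0,0) = 0` and `∂₁²k(0,0) = 0`. -/
theorem statement15 (k : ℝ × ℝ → ℝ) (hk : ContDiff ℝ (⊤ : ℕ∞) k)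
    (hO : ∃ C > 0, ∃ ε > 0, ∀ h Z : ℝ, |h| < ε → |Z| < ε →
      |k (h, Z)| ≤ C * (h ^ 2 + |Z|) ^ ((3 : ℝ) / 2)) :
    k (0, 0) = 0 ∧
    fderiv ℝ k (0, 0) ((1, 0) : ℝ × ℝ) = 0 ∧
    fderiv ℝ k (0, 0) ((0, 1) : ℝ × ℝ) = 0 ∧
    fderiv ℝ (fun p => fderiv ℝ k p ((1, 0) : ℝ × ℝ)) (0, 0) ((1, 0) : ℝ × ℝ) = 0 := by
  obtain ⟨C, hC, ε, hε, hb⟩ := hO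
  have h00 : k (0, 0) = 0 := by
    have := hb 0 0 (by simpa) (by simpa)
    have e : ((0:ℝ) ^ 2 + |(0:ℝ)|) ^ ((3 : ℝ) / 2) = 0 := by
      norm_num
    rw [e, mul_zero] at this
    exact abs_nonpos_iff.1 this
  have hline1 : ∀ (F : ℝ × ℝ → ℝ), Differentiable ℝ F → ∀ x : ℝ,
      HasDerivAt (fun h => F (h, 0)) (fderiv ℝ F (x, 0) (1, 0)) x := fun F hF x =>
    (hF (x, 0)).hasFDerivAt.comp_hasDerivAt x ((hasDerivAt_id x).prodMk (hasDerivAt_const x (0:ℝ)))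
  have hkd : Differentiable ℝ k := hk.differentiable (by simp)
  have hb1 : ∀ x, |x| < ε → |k (x, 0)| ≤ C * |x| ^ 3 := by
    intro x hx
    have := hb x 0 hx (by simpa)
    have e : (x ^ 2 + |(0:ℝ)|) ^ ((3 : ℝ) / 2) = |x| ^ 3 := by
      rw [abs_zero, add_zero, ← sq_abs, ← Real.rpow_natCast, ← Real.rpow_natCast,
        ← Real.rpow_mul (abs_nonneg x)]
      norm_num
    rwa [e] at this
  have hg' : HasDerivAt (fun h => k (h, 0)) 0 0 := by
    refine aux_deriv _ (fun x => x ^ 2) C ε hε ?_ h00 ?_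
    · have : Continuous (fun x : ℝ => x ^ 2) := by fun_prop
      simpa using this.tendsto 0
    · intro x hx
      refine (hb1 x hx).trans_eq ?_
      rw [abs_pow]; ring
  have hm' : HasDerivAt (fun Z => k (0, Z)) 0 0 := by
    refine aux_deriv _ (fun x => √|x|) C ε hε ?_ h00 ?_
    · have : Continuous (fun x : ℝ => √|x|) := by fun_prop
      simpa using this.tendsto 0
    · intro x hx
      have := hb 0 x (by simpa) hx
      refine this.trans_eq ?_
      rw [abs_of_nonneg (Real.sqrt_nonneg _), Real.sqrt_eq_rpow]
      congr 1
      rw [show (3:ℝ) / 2 = 1 + 1 / 2 by norm_num, Real.rpow_add_of_nonneg (by positivity)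
        (by norm_num) (by norm_num)]
      simp
  have hk1 : ContDiff ℝ 1 (fun p => fderiv ℝ k p ((1, 0) : ℝ × ℝ)) :=
    (hk.fderiv_right (m := 1) (by norm_cast)).clm_apply contDiff_const
  refine ⟨h00, (hline1 k hkd 0).unique hg', ?_, ?_⟩
  · exact ((hkd (0, 0)).hasFDerivAt.comp_hasDerivAt (0:ℝ)
      ((hasDerivAt_const (0:ℝ) (0:ℝ)).prodMk (hasDerivAt_id (0:ℝ)))).unique hm'
  · have hdg : deriv (fun h => k (h, 0)) = fun x => fderiv ℝ k (x, 0) (1, 0) :=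
      funext fun x => (hline1 k hkd x).deriv
    have hdd : deriv (deriv (fun h => k (h, 0))) 0 =
        fderiv ℝ (fun p => fderiv ℝ k p ((1, 0) : ℝ × ℝ)) (0, 0) ((1, 0) : ℝ × ℝ) := by
      rw [hdg]
      exact (hline1 _ (hk1.differentiable (by norm_num)) 0).deriv
    have hg2 : ContDiff ℝ 2 (fun h : ℝ => k (h, 0)) :=
      (hk.of_le (by norm_cast)).comp (contDiff_id.prodMk contDiff_const)
    have l1 := aux_le _ hg2 C ε hC hε hb1 h00 hg'.deriv
    have l2 := aux_le (fun h => -k (h, 0)) hg2.neg C ε hC hε (by simpa using hb1)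
      (by simp [h00]) (by simpa using hg'.deriv)
    have e : deriv (fun h => -k (h, 0)) = fun x => -deriv (fun h => k (h, 0)) x := by
      funext x; exact deriv.fun_neg
    rw [e, deriv.fun_neg] at l2
    rw [← hdd]
    linarith
end
end

section
/- Let k : ℝ² → ℝ be a smooth function such that k(h,Z) = O((h² + |Z|)^{3/2}) as (h,Z) → (0,0). Then there exist real constants υ₁, υ₂ with the following property: for every C̃ > 0 there exist C > 0 and h₀ > 0 such that for all h ∈ (0,h₀) and all integers m ≥ 1 satisfying (2m−1)h² ≤ C̃h, one has |k(h, (2m−1)h²) − υ₁(m − 1/2)h³ − υ₂(m − 1/2)²h⁴| ≤ C h³. -/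
noncomputable section

open Asymptotics Filter Topology in
theorem aux_lift {E F : Type*} [NormedAddCommGroup E] [NormedSpace ℝ E]
    [NormedAddCommGroup F] [NormedSpace ℝ F] (f : E → F) (f' : E → E →L[ℝ] F)
    (hf : ∀ x, HasFDerivAt f (f' x) x) (h0 : f 0 = 0) (n : ℕ)
    (hO : ∃ K > 0, ∃ δ > 0, ∀ v, ‖v‖ < δ → ‖f' v‖ ≤ K * ‖v‖ ^ n) :
    ∃ K > 0, ∃ δ > 0, ∀ v, ‖v‖ < δ → ‖f v‖ ≤ K * ‖v‖ ^ (n + 1) := by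
  obtain ⟨K, hK, δ, hδ, H⟩ := hO
  refine ⟨K, hK, δ, hδ, fun v hv => ?_⟩
  have := (convex_closedBall (0 : E) ‖v‖).norm_image_sub_le_of_norm_hasFDerivWithin_le
    (f := f) (f' := f') (C := K * ‖v‖ ^ n) (x := 0) (y := v)
    (fun x _ => (hf x).hasFDerivWithinAt) (fun x hx => ?_) (by simp) (by simp)
  · rw [h0, sub_zero, sub_zero] at this
    rw [pow_succ, ← mul_assoc]; exact this
  · have hx' : ‖x‖ ≤ ‖v‖ := by simpa using hx
    refine (H x (hx'.trans_lt hv)).trans ?_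
    gcongr

theorem aux_zero (a K δ : ℝ) (hδ : 0 < δ) (H : ∀ t, 0 < t → t < δ → |a| ≤ K * t) : a = 0 := by
  by_contra ha
  have ha' : 0 < |a| := abs_pos.mpr ha
  have hK : 0 < |K| + 1 := by positivity
  set t := min (δ / 2) (|a| / (2 * (|K| + 1))) with ht
  have htp : 0 < t := by positivity
  have h1 := H t htp ((min_le_left _ _).trans_lt (by linarith))
  have h2 : t * (2 * (|K| + 1)) ≤ |a| := by
    rw [← le_div_iff₀ (by positivity)]; exact min_le_right _ _
  nlinarith [le_abs_self K, abs_nonneg K]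

theorem aux_taylor (k : ℝ × ℝ → ℝ) (hk : ContDiff ℝ (⊤ : ℕ∞) k) :
    ∃ c a b p q r : ℝ, ∃ K > 0, ∃ δ > 0, ∀ h Z : ℝ, |h| < δ → |Z| < δ →
      |k (h, Z) - (c + a * h + b * Z + p * h ^ 2 + q * (h * Z) + r * Z ^ 2)|
        ≤ K * (max |h| |Z|) ^ 3 := by
  have hk1 : ContDiff ℝ (⊤ : ℕ∞) (fderiv ℝ k) := hk.fderiv_right (by simp)
  have hk2 : ContDiff ℝ (⊤ : ℕ∞) (fderiv ℝ (fderiv ℝ k)) := hk1.fderiv_right (by simp)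
  set A := fderiv ℝ k 0 with hA
  set B := fderiv ℝ (fderiv ℝ k) 0 with hB
  have hsymm : ∀ v w, B v w = B w v := by
    have : IsSymmSndFDerivAt ℝ k 0 :=
      hk.contDiffAt.isSymmSndFDerivAt (by simpa using WithTop.coe_le_coe.mpr (le_top : (2 : ℕ∞) ≤ ⊤))
    exact fun v w => this v w
  have d0 : ∀ x, HasFDerivAt k (fderiv ℝ k x) x := fun x =>
    (hk.differentiable (by simp) x).hasFDerivAt
  have d1 : ∀ x, HasFDerivAt (fderiv ℝ k) (fderiv ℝ (fderiv ℝ k) x) x := fun x =>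
    (hk1.differentiable (by simp) x).hasFDerivAt
  have s2 : ∃ K > 0, ∃ δ > 0, ∀ v, ‖v‖ < δ →
      ‖fderiv ℝ (fderiv ℝ k) v - B‖ ≤ K * ‖v‖ ^ 1 := by
    have h := ((hk2.differentiable (by simp)) 0).isBigO_sub
    obtain ⟨K, hK, h⟩ := h.exists_pos
    rw [Asymptotics.isBigOWith_iff, Metric.eventually_nhds_iff] at h
    obtain ⟨δ, hδ, h⟩ := h
    refine ⟨K, hK, δ, hδ, fun v hv => ?_⟩
    simpa using h (y := v) (by simpa using hv)
  have s1 := aux_lift (fun v => fderiv ℝ k v - A - B v)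
    (fun v => fderiv ℝ (fderiv ℝ k) v - B)
    (fun x => ((d1 x).sub_const A).sub B.hasFDerivAt) (by simp [hA]) 1 s2
  have s0 := aux_lift (fun v => k v - k 0 - A v - (1/2 : ℝ) * B v v)
    (fun v => fderiv ℝ k v - A - B v)
    (fun x => by
      have hq : HasFDerivAt (fun v => B v v) _ x :=
        B.hasFDerivAt.clm_apply (hasFDerivAt_id x)
      refine ((((d0 x).sub_const (k 0)).sub A.hasFDerivAt).sub
        (hq.const_mul (1/2 : ℝ))).congr_fderiv ?_
      refine ContinuousLinearMap.ext fun w => ?_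
      have hs := hsymm w x
      simp only [sub_apply, smul_apply, add_apply, ContinuousLinearMap.comp_apply,
        ContinuousLinearMap.flip_apply, ContinuousLinearMap.id_apply, smul_eq_mul, hs]
      ring) (by simp) 2 s1
  obtain ⟨K, hK, δ, hδ, H⟩ := s0
  refine ⟨k 0, A (1, 0), A (0, 1), B (1, 0) (1, 0) / 2, B (1, 0) (0, 1), B (0, 1) (0, 1) / 2,
    K, hK, δ, hδ, fun h Z hh hZ => ?_⟩
  have hn : ‖(h, Z)‖ = max |h| |Z| := by simp [Prod.norm_def]
  have := H (h, Z) (by rw [hn]; exact max_lt hh hZ)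
  rw [hn, Real.norm_eq_abs] at this
  convert this using 2
  have hv : ((h, Z) : ℝ × ℝ) = h • (1, 0) + Z • (0, 1) := by simp
  rw [hv]
  simp only [map_add, map_smul, add_apply, smul_apply, smul_eq_mul]
  rw [hsymm (0, 1) (1, 0)]
  ring

/-- Taylor-expansion estimate: if `k` is smooth with `k(h,Z) = O((h² + |Z|)^{3/2})` near
`(0,0)`, then there are constants `υ₁, υ₂` such that for every `C̃ > 0` there are `C > 0`
and `h₀ > 0` with
`|k(h,(2m−1)h²) − υ₁(m−1/2)h³ − υ₂(m−1/2)²h⁴| ≤ Ch³`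
for all `h ∈ (0,h₀)` and all integers `m ≥ 1` with `(2m−1)h² ≤ C̃h`. -/
theorem statement16 (k : ℝ × ℝ → ℝ) (hk : ContDiff ℝ (⊤ : ℕ∞) k)
    (hO : ∃ C > 0, ∃ ε > 0, ∀ h Z : ℝ, |h| < ε → |Z| < ε →
      |k (h, Z)| ≤ C * (h ^ 2 + |Z|) ^ ((3 : ℝ) / 2)) :
    ∃ υ₁ υ₂ : ℝ, ∀ Ctilde > (0 : ℝ), ∃ C > (0 : ℝ), ∃ h₀ > (0 : ℝ),
      ∀ h : ℝ, 0 < h → h < h₀ → ∀ m : ℕ, 1 ≤ m →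
        (2 * (m : ℝ) - 1) * h ^ 2 ≤ Ctilde * h →
        |k (h, (2 * (m : ℝ) - 1) * h ^ 2) - υ₁ * ((m : ℝ) - 1/2) * h ^ 3 -
            υ₂ * ((m : ℝ) - 1/2) ^ 2 * h ^ 4| ≤ C * h ^ 3 := by
  obtain ⟨c, a, b, p, q, r, K, hK, δ, hδ, H⟩ := aux_taylor k hk
  obtain ⟨M, hM, ε, hε, hO⟩ := hO
  have hk0 : k (0, 0) = 0 := by
    have := hO 0 0 (by simpa) (by simpa)
    rw [show ((0 : ℝ) ^ 2 + |(0 : ℝ)|) = 0 by simp, Real.zero_rpow (by norm_num)] at this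
    simpa using this
  have hc : c = 0 := by
    have := H 0 0 (by simpa) (by simpa)
    simpa [hk0] using this
  subst hc
  have hrp : ∀ t : ℝ, 0 < t → (t ^ 2) ^ ((3 : ℝ) / 2) = t ^ 3 := by
    intro t ht
    rw [← Real.rpow_natCast t 2, ← Real.rpow_mul ht.le, ← Real.rpow_natCast t 3]
    norm_num
  set η := min (min δ ε) 1 with hη
  have hηp : 0 < η := by positivity
  have hηδ : η ≤ δ := (min_le_left _ _).trans (min_le_left _ _)
  have hηε : η ≤ ε := (min_le_left _ _).trans (min_le_right _ _)
  have hη1 : η ≤ 1 := min_le_right _ _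
  have F1 : ∀ t, 0 < t → t < η → |a * t + p * t ^ 2| ≤ (K + M) * t ^ 3 := by
    intro t ht hlt
    have e : |t| = t := abs_of_pos ht
    have h1 := H t 0 (by rw [e]; linarith) (by simpa)
    have h2 := hO t 0 (by rw [e]; linarith) (by simpa)
    rw [abs_zero, add_zero, hrp t ht] at h2
    rw [abs_zero, e, max_eq_left ht.le] at h1
    rw [abs_le] at *
    constructor <;> nlinarith
  have F2 : ∀ t, 0 < t → t < η → |b * t ^ 2 + r * t ^ 4| ≤ (K + M) * t ^ 3 := by
    intro t ht hlt
    have e : |t ^ 2| = t ^ 2 := abs_of_pos (by positivity)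
    have hl : t ^ 2 ≤ t := by nlinarith
    have h1 := H 0 (t ^ 2) (by simpa) (by rw [e]; linarith)
    have h2 := hO 0 (t ^ 2) (by simpa) (by rw [e]; linarith)
    rw [e, zero_pow (by norm_num), zero_add, hrp t ht] at h2
    rw [abs_zero, e, max_eq_right (by positivity)] at h1
    have h3 : K * (t ^ 2) ^ 3 ≤ K * t ^ 3 := by gcongr
    rw [abs_le] at *
    constructor <;> nlinarith
  have ha : a = 0 := by
    refine aux_zero a (K + M + |p|) η hηp fun t ht hlt => ?_
    have h1 := F1 t ht hlt
    have h2 : |a| * t ≤ (K + M) * t ^ 3 + |p| * t ^ 2 := by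
      calc |a| * t = |(a * t + p * t ^ 2) - p * t ^ 2| := by
            rw [add_sub_cancel_right, abs_mul, abs_of_pos ht]
        _ ≤ |a * t + p * t ^ 2| + |p * t ^ 2| := abs_sub _ _
        _ ≤ _ := by rw [abs_mul p, abs_of_pos (by positivity : 0 < t ^ 2)]; gcongr
    have h3 : (K + M) * t ^ 3 ≤ (K + M) * t ^ 2 := by
      gcongr ?_ * ?_
      nlinarith [sq_nonneg t]
    refine le_of_mul_le_mul_right ?_ ht
    nlinarith
  subst ha
  have hp : p = 0 := by
    refine aux_zero p (K + M) η hηp fun t ht hlt => ?_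
    have h1 := F1 t ht hlt
    rw [zero_mul, zero_add, abs_mul, abs_of_pos (by positivity : 0 < t ^ 2)] at h1
    refine le_of_mul_le_mul_right ?_ (by positivity : 0 < t ^ 2)
    nlinarith
  subst hp
  have hb : b = 0 := by
    refine aux_zero b (K + M + |r|) η hηp fun t ht hlt => ?_
    have h1 := F2 t ht hlt
    have h2 : |b| * t ^ 2 ≤ (K + M) * t ^ 3 + |r| * t ^ 4 := by
      calc |b| * t ^ 2 = |(b * t ^ 2 + r * t ^ 4) - r * t ^ 4| := by
            rw [add_sub_cancel_right, abs_mul, abs_of_pos (by positivity : 0 < t ^ 2)]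
        _ ≤ |b * t ^ 2 + r * t ^ 4| + |r * t ^ 4| := abs_sub _ _
        _ ≤ _ := by rw [abs_mul r, abs_of_pos (by positivity : 0 < t ^ 4)]; gcongr
    have h3 : |r| * t ^ 4 ≤ |r| * t ^ 3 := by
      gcongr ?_ * ?_
      exact pow_le_pow_of_le_one ht.le (by linarith) (by norm_num)
    refine le_of_mul_le_mul_right ?_ (by positivity : 0 < t ^ 2)
    nlinarith
  subst hb
  refine ⟨2 * q, 4 * r, fun D hD => ⟨K * (1 + D) ^ 3, by positivity, δ / (1 + D), by positivity,
    fun h hh hlt m hm hmh => ?_⟩⟩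
  rw [lt_div_iff₀ (by positivity)] at hlt
  have hm' : (1 : ℝ) ≤ m := by exact_mod_cast hm
  set Z := (2 * (m : ℝ) - 1) * h ^ 2 with hZ
  have hZ0 : 0 ≤ Z := mul_nonneg (by linarith) (by positivity)
  have hmax : max |h| |Z| ≤ (1 + D) * h := by
    rw [abs_of_pos hh, abs_of_nonneg hZ0]
    exact max_le (by nlinarith) (by nlinarith)
  have h1 := H h Z (by linarith [le_max_left |h| |Z|]) (by linarith [le_max_right |h| |Z|])
  have h2 : K * (max |h| |Z|) ^ 3 ≤ K * ((1 + D) * h) ^ 3 := by gcongr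
  refine le_trans (le_of_eq ?_) (h1.trans (h2.trans (le_of_eq (by ring))))
  congr 1
  rw [sub_sub]
  congr 1
  rw [hZ]; ring
end
end
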